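/- arXiv:2107.03503 — 6 statements merged into one kernel-verified Lean document; each statement's English description precedes it below -/
import Mathlib

section
/- (Proposition 3.1) The matrices x_m, y_m define a module in CM(B_{k,n}); concretely: x_m y_m = y_m x_m = t·(identity matrix) for every m ∈ {1,…,n}, and for every vertex m ∈ {1,…,n} the relation x^k = y^{n−k} holds, i.e. x_{m+k}·x_{m+k−1}⋯x_{m+1} = y_{m−(n−k)+1}·y_{m−(n−k)+2}⋯y_m as products of 2×2 matrices over R (all indices read modulo n; both sides represent the induced map from the copy of R² at vertex m to the copy at vertex m+k ≡ m−(n−k) mod n). -/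
open PowerSeries Matrix

noncomputable section

/-- `R` is the ring of formal power series `ℂ[[t]]`. -/
abbrev R : Type := PowerSeries ℂ

/-- The variable `t` of `ℂ[[t]]`. -/
noncomputable def t : R := PowerSeries.X

/-- `2 × 2` matrices over `R = ℂ[[t]]`. -/
abbrev M2 : Type := Matrix (Fin 2) (Fin 2) R

/-- The product `x_{m+k} ⬝ x_{m+k-1} ⬝ ⋯ ⬝ x_{m+1}` of `k` arrow matrices along the
cycle, representing the map `x^k` from the copy of `R²` at vertex `m` to the copy at
vertex `m + k` (indices modulo `n`). -/
def pathProdX {n : ℕ} (x : ZMod n → M2) (m : ZMod n) : ℕ → M2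
  | 0 => 1
  | s + 1 => x (m + ((s + 1 : ℕ) : ZMod n)) * pathProdX x m s

/-- The product `y_{m-k+1} ⬝ y_{m-k+2} ⬝ ⋯ ⬝ y_m` of `k` arrow matrices along the
cycle, representing the map `y^k` from the copy of `R²` at vertex `m` to the copy at
vertex `m - k` (indices modulo `n`). -/
def pathProdY {n : ℕ} (y : ZMod n → M2) (m : ZMod n) : ℕ → M2
  | 0 => 1
  | s + 1 => y (m - ((s : ℕ) : ZMod n)) * pathProdY y m s

/-!
Put `c m` for the upper right entry of `x_m`. In a product `x_s ⋯ x_1` the diagonal entries are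
powers of `t`, with exponents counting the elements of `{1, …, s}` outside `J` and outside `I`. If
`c m ≠ 0`, then `m` lies in the symmetric difference of `I` and `J`, and there interlacing fixes the
difference between the two exponents in such a way that `t` times the upper right entry of the
product is always the upper left entry times `c 1 + ⋯ + c s`. Around the whole cycle the sum of the
`c m` vanishes, and both exponents are `n - k`, so `x^n = t^(n-k)` at vertex `0`. Since
`x y = y x = t` and `t` is not a zero divisor, the same holds at every vertex, and cancelling
`x^(n-k)` from `x^(n-k) x^k = x^(n-k) y^(n-k)` gives `x^k = y^(n-k)`.
-/

open Finset
open scoped symmDiff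

section PathProducts

variable {n : ℕ} {x y : ZMod n → M2}

lemma pathProdX_add (x : ZMod n → M2) (m : ZMod n) (a c : ℕ) :
    pathProdX x m (a + c) = pathProdX x (m + (a : ZMod n)) c * pathProdX x m a := by
  induction c with
  | zero => simp only [pathProdX, add_zero, one_mul]
  | succ c ih =>
    rw [← add_assoc, pathProdX, ih, pathProdX, Matrix.mul_assoc, add_assoc a, Nat.cast_add,
      ← add_assoc m]

lemma pathProdX_succ' (x : ZMod n → M2) (m : ZMod n) (s : ℕ) :
    pathProdX x m (s + 1) = pathProdX x (m + 1) s * x (m + 1) := by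
  simpa [pathProdX, add_comm] using pathProdX_add x m 1 s

lemma pathProdX_cycle_rotate (x : ZMod n → M2) (m : ZMod n) :
    pathProdX x (m + 1) n * x (m + 1) = x (m + 1) * pathProdX x m n := by
  rw [← pathProdX_succ', pathProdX, Nat.cast_succ, ZMod.natCast_self, zero_add]

lemma pathProdY_mul_pathProdX (hyx : ∀ m, y m * x m = t • (1 : M2)) (m : ZMod n) (s : ℕ) :
    pathProdY y m s * pathProdX x (m - s) s = t ^ s • (1 : M2) := by
  induction s with
  | zero => simp only [pathProdX, pathProdY, pow_zero, one_smul, mul_one]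
  | succ s ih =>
    have hX : pathProdX x (m - (s + 1 : ℕ)) (s + 1) = pathProdX x (m - s) s * x (m - s) := by
      rw [pathProdX_succ', Nat.cast_succ, sub_add_eq_sub_sub, sub_add_cancel]
    calc pathProdY y m (s + 1) * pathProdX x (m - (s + 1 : ℕ)) (s + 1)
        = y (m - s) * (pathProdY y m s * pathProdX x (m - s) s) * x (m - s) := by
          rw [hX, pathProdY]; simp only [Matrix.mul_assoc]
      _ = t ^ (s + 1) • (1 : M2) := by
          rw [ih, mul_smul_one, smul_mul_assoc, hyx, smul_smul, pow_succ]

lemma t_ne_zero : t ≠ 0 := PowerSeries.X_ne_zero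

lemma pathProdX_cycle_eq_smul_one [NeZero n] (hxy : ∀ m, x m * y m = t • (1 : M2)) {a : R}
    (h0 : pathProdX x 0 n = a • (1 : M2)) (m : ZMod n) : pathProdX x m n = a • (1 : M2) := by
  suffices h : ∀ s : ℕ, pathProdX x (s : ZMod n) n = a • (1 : M2) by
    simpa only [ZMod.natCast_zmod_val] using h m.val
  intro s
  induction s with
  | zero => rwa [Nat.cast_zero]
  | succ s ih =>
    refine smul_right_injective M2 t_ne_zero ?_
    calc t • pathProdX x ((s + 1 : ℕ) : ZMod n) n
        = pathProdX x (s + 1) n * x (s + 1) * y (s + 1) := by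
          rw [Matrix.mul_assoc, hxy, mul_smul_one, Nat.cast_succ]
      _ = t • a • (1 : M2) := by
          rw [pathProdX_cycle_rotate, ih, mul_smul_one, smul_mul_assoc, hxy, smul_comm]

theorem pathProdX_eq_pathProdY [NeZero n] {k : ℕ} (hk : k ≤ n)
    (hxy : ∀ m, x m * y m = t • (1 : M2)) (hyx : ∀ m, y m * x m = t • (1 : M2))
    (h0 : pathProdX x 0 n = t ^ (n - k) • (1 : M2)) (m : ZMod n) :
    pathProdX x m k = pathProdY y m (n - k) := by
  have hcycle : pathProdX x (m + k) (n - k) * pathProdX x m k = t ^ (n - k) • (1 : M2) := by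
    rw [← pathProdX_add, Nat.add_sub_cancel' hk, pathProdX_cycle_eq_smul_one hxy h0]
  have hinv : pathProdY y m (n - k) * pathProdX x (m + k) (n - k) = t ^ (n - k) • (1 : M2) := by
    simpa [Nat.cast_sub hk] using pathProdY_mul_pathProdX hyx m (n - k)
  refine smul_right_injective M2 (pow_ne_zero (n - k) t_ne_zero) ?_
  calc t ^ (n - k) • pathProdX x m k
      = pathProdY y m (n - k) * (pathProdX x (m + k) (n - k) * pathProdX x m k) := by
        rw [← Matrix.mul_assoc, hinv, smul_mul_assoc, one_mul]
    _ = t ^ (n - k) • pathProdY y m (n - k) := by rw [hcycle, mul_smul_one]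

-- The hypothesis `hc` makes all terms of the upper right entry of the product, multiplied by `a`,
-- share the factor `∏ p`.
lemma smul_pathProdX_zero_of_upperTriangular {a : R} {p q c : ℕ → R} {N : ℕ}
    (hx : ∀ m ∈ Icc 1 N, x (m : ZMod n) = !![p m, c m; 0, q m])
    (hc : ∀ s < N,
      c (s + 1) * (a * ∏ m ∈ Icc 1 s, q m) = c (s + 1) * ∏ m ∈ Icc 1 (s + 1), p m) :
    a • pathProdX x 0 N =
      !![a * ∏ m ∈ Icc 1 N, p m, (∏ m ∈ Icc 1 N, p m) * ∑ m ∈ Icc 1 N, c m;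
        0, a * ∏ m ∈ Icc 1 N, q m] := by
  induction N with
  | zero => simp [pathProdX, Matrix.one_fin_two, Matrix.smul_of]
  | succ N ih =>
    have ih := ih (fun m hm ↦ hx m (Icc_subset_Icc_right N.le_succ hm))
      (fun s hs ↦ hc s (hs.trans N.lt_succ_self))
    have hcN := hc N N.lt_succ_self
    rw [prod_Icc_succ_top (Nat.le_add_left 1 N)] at hcN
    rw [pathProdX, zero_add, ← Matrix.mul_smul, ih,
      hx (N + 1) (right_mem_Icc.2 (Nat.le_add_left 1 N))]
    simp only [prod_Icc_succ_top (Nat.le_add_left 1 N), sum_Icc_succ_top (Nat.le_add_left 1 N),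
      Matrix.mul_fin_two]
    ext u v : 1
    fin_cases u <;> fin_cases v <;>
      simp only [Fin.zero_eta, Fin.mk_one, of_apply, cons_val_zero, cons_val_one]
    · ring
    · linear_combination hcN
    · ring
    · ring

end PathProducts

/-- `I` and `J` are tightly interlacing: the elements of the symmetric difference, in increasing
order, lie alternately in `I` and in `J`, beginning with `I`. This is encoded by counting, the
contributions of `I ∩ J` cancelling; that `I` and `J` have the same size is not part of the
definition. -/
def TightlyInterlacing (I J : Finset ℕ) : Prop :=
  ∀ m ∈ I ∆ J, #{a ∈ J | a ≤ m} = #{a ∈ I | a < m}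

lemma union_symmDiff_union_of_disjoint {α : Type*} [DecidableEq α] {A B P : Finset α}
    (hAB : Disjoint A B) (hAP : Disjoint A P) (hBP : Disjoint B P) :
    (A ∪ P) ∆ (B ∪ P) = A ∪ B := by
  grind [disjoint_left, mem_symmDiff]

lemma disjoint_image_range_iff {α : Type*} [DecidableEq α] {f : ℕ → α} {r : ℕ} {P : Finset α} :
    Disjoint ((range r).image f) P ↔ ∀ l < r, f l ∉ P := by
  simp only [disjoint_left, forall_mem_image, mem_range]

lemma sum_Icc_one_two_mul {M : Type*} [AddCommMonoid M] (f : ℕ → M) (r : ℕ) :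
    ∑ m ∈ Icc 1 (2 * r), f m = ∑ l ∈ range r, (f (2 * l + 1) + f (2 * l + 2)) := by
  induction r with
  | zero => rfl
  | succ r ih =>
    rw [mul_add_one, sum_Icc_succ_top (by omega), sum_Icc_succ_top (by omega), ih,
      sum_range_succ, add_assoc]

/-- The subset `{f 0, …, f (r - 1)} ∪ P`: for `f = i` and `f = j` these are the `k`-subsets `I` and
`J`. -/
def seqUnion (r : ℕ) (f : ℕ → ℕ) (P : Finset ℕ) : Finset ℕ := (range r).image f ∪ P

lemma mem_seqUnion {r m : ℕ} {f : ℕ → ℕ} {P : Finset ℕ} :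
    m ∈ seqUnion r f P ↔ (∃ l < r, f l = m) ∨ m ∈ P := by
  simp only [seqUnion, mem_union, mem_image, mem_range]

lemma seqUnion_subset {r : ℕ} {f : ℕ → ℕ} {P S : Finset ℕ} (hf : ∀ l < r, f l ∈ S) (hP : P ⊆ S) :
    seqUnion r f P ⊆ S :=
  union_subset (image_subset_iff.2 fun l hl ↦ hf l (mem_range.1 hl)) hP

lemma card_seqUnion {r : ℕ} {f : ℕ → ℕ} {P : Finset ℕ} (hf : Set.InjOn f (range r))
    (hP : ∀ l < r, f l ∉ P) : #(seqUnion r f P) = r + #P := by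
  rw [seqUnion, card_union_of_disjoint (disjoint_image_range_iff.2 hP), card_image_of_injOn hf,
    card_range]

/-- The chain `i 0 < j 0 < i 1 < ⋯ < i (r - 1) < j (r - 1)`. -/
structure InterlacedSeq (r : ℕ) (i j : ℕ → ℕ) : Prop where
  lt : ∀ l, l < r → i l < j l
  lt_succ : ∀ l, l + 1 < r → j l < i (l + 1)

namespace InterlacedSeq

variable {r l l' : ℕ} {i j : ℕ → ℕ} {P : Finset ℕ}

lemma right_lt_left (h : InterlacedSeq r i j) (hl : l < l') (hr : l' < r) : j l < i l' := by
  induction l', hl using Nat.le_induction with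
  | base => exact h.lt_succ l hr
  | succ l' _ ih =>
    exact (ih (by omega)).trans ((h.lt l' (by omega)).trans (h.lt_succ l' hr))

lemma left_strictMonoOn (h : InterlacedSeq r i j) : StrictMonoOn i (range r) :=
  fun l _ _ hr hl ↦ (h.lt l (hl.trans (mem_range.1 hr))).trans (h.right_lt_left hl (mem_range.1 hr))

lemma right_strictMonoOn (h : InterlacedSeq r i j) : StrictMonoOn j (range r) :=
  fun _ _ l' hr hl ↦ (h.right_lt_left hl (mem_range.1 hr)).trans (h.lt l' (mem_range.1 hr))

lemma left_ne_right (h : InterlacedSeq r i j) (hl : l < r) (hl' : l' < r) : i l ≠ j l' := by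
  rcases le_or_gt l l' with hle | hlt
  · exact ((h.left_strictMonoOn.monotoneOn (mem_range.2 hl) (mem_range.2 hl') hle).trans_lt
      (h.lt l' hl')).ne
  · exact (h.right_lt_left hlt hl).ne'

lemma disjoint_image (h : InterlacedSeq r i j) :
    Disjoint ((range r).image i) ((range r).image j) := by
  simp only [disjoint_left, mem_image, mem_range, not_exists, not_and]
  rintro _ ⟨l, hl, rfl⟩ l' hl'
  exact (h.left_ne_right hl hl').symm

lemma one_le_left (h : InterlacedSeq r i j) (hi : 1 ≤ i 0) (hl : l < r) : 1 ≤ i l :=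
  hi.trans (h.left_strictMonoOn.monotoneOn (mem_range.2 (by omega)) (mem_range.2 hl) l.zero_le)

lemma right_le {n : ℕ} (h : InterlacedSeq r i j) (hj : j (r - 1) ≤ n) (hl : l < r) : j l ≤ n :=
  (h.right_strictMonoOn.monotoneOn (mem_range.2 hl) (mem_range.2 (by omega)) (by omega)).trans hj

lemma left_mem_Icc {n : ℕ} (h : InterlacedSeq r i j) (hi : 1 ≤ i 0) (hj : j (r - 1) ≤ n)
    (hl : l < r) : i l ∈ Icc 1 n :=
  mem_Icc.2 ⟨h.one_le_left hi hl, (h.lt l hl).le.trans (h.right_le hj hl)⟩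

lemma right_mem_Icc {n : ℕ} (h : InterlacedSeq r i j) (hi : 1 ≤ i 0) (hj : j (r - 1) ≤ n)
    (hl : l < r) : j l ∈ Icc 1 n :=
  mem_Icc.2 ⟨(h.one_le_left hi hl).trans (h.lt l hl).le, h.right_le hj hl⟩

lemma right_le_iff_left_lt (h : InterlacedSeq r i j) {m : ℕ}
    (hm : m ∈ (range r).image i ∪ (range r).image j) (hl : l < r) : j l ≤ m ↔ i l < m := by
  refine ⟨(h.lt l hl).trans_le, fun hlm ↦ ?_⟩
  simp only [mem_union, mem_image, mem_range] at hm
  rcases hm with ⟨l', hl', rfl⟩ | ⟨l', hl', rfl⟩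
  · exact (h.right_lt_left ((h.left_strictMonoOn.lt_iff_lt (mem_range.2 hl)
      (mem_range.2 hl')).1 hlm) hl').le
  · by_contra! hlt
    exact (h.right_lt_left ((h.right_strictMonoOn.lt_iff_lt (mem_range.2 hl')
      (mem_range.2 hl)).1 hlt) hl).not_gt hlm

lemma card_filter_image (h : InterlacedSeq r i j) {m : ℕ}
    (hm : m ∈ (range r).image i ∪ (range r).image j) :
    #{a ∈ (range r).image j | a ≤ m} = #{a ∈ (range r).image i | a < m} := by
  rw [filter_image, filter_image,
    card_image_of_injOn (h.right_strictMonoOn.injOn.mono (filter_subset _ _)),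
    card_image_of_injOn (h.left_strictMonoOn.injOn.mono (filter_subset _ _)),
    filter_congr fun l hl ↦ h.right_le_iff_left_lt hm (mem_range.1 hl)]

lemma seqUnion_symmDiff (h : InterlacedSeq r i j) (hP : ∀ l < r, i l ∉ P ∧ j l ∉ P) :
    seqUnion r i P ∆ seqUnion r j P = (range r).image i ∪ (range r).image j :=
  union_symmDiff_union_of_disjoint h.disjoint_image
    (disjoint_image_range_iff.2 fun l hl ↦ (hP l hl).1)
    (disjoint_image_range_iff.2 fun l hl ↦ (hP l hl).2)

theorem tightlyInterlacing (h : InterlacedSeq r i j) (hP : ∀ l < r, i l ∉ P ∧ j l ∉ P) :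
    TightlyInterlacing (seqUnion r i P) (seqUnion r j P) := by
  have hiP := disjoint_image_range_iff.2 fun l hl ↦ (hP l hl).1
  have hjP := disjoint_image_range_iff.2 fun l hl ↦ (hP l hl).2
  intro m hm
  rw [h.seqUnion_symmDiff hP] at hm
  have hmP : m ∉ P := disjoint_left.1 (disjoint_union_left.2 ⟨hiP, hjP⟩) hm
  have hcommon : {a ∈ P | a ≤ m} = {a ∈ P | a < m} :=
    filter_congr fun a ha ↦ (ne_of_mem_of_not_mem ha hmP).le_iff_lt
  rw [seqUnion, seqUnion, filter_union, filter_union,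
    card_union_of_disjoint (disjoint_filter_filter hjP),
    card_union_of_disjoint (disjoint_filter_filter hiP), h.card_filter_image hm, hcommon]

lemma sum_eq_sum_range {M : Type*} [AddCommMonoid M] {S : Finset ℕ} (h : InterlacedSeq r i j)
    (hi : ∀ l < r, i l ∈ S) (hj : ∀ l < r, j l ∈ S) {c : ℕ → M}
    (hc : ∀ m ∈ S, m ∉ (range r).image i ∪ (range r).image j → c m = 0) :
    ∑ m ∈ S, c m = ∑ l ∈ range r, (c (i l) + c (j l)) := by
  have hS : (range r).image i ∪ (range r).image j ⊆ S :=
    union_subset (image_subset_iff.2 fun l hl ↦ hi l (mem_range.1 hl))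
      (image_subset_iff.2 fun l hl ↦ hj l (mem_range.1 hl))
  rw [← sum_subset hS hc, sum_union h.disjoint_image, sum_image h.left_strictMonoOn.injOn,
    sum_image h.right_strictMonoOn.injOn, sum_add_distrib]

lemma forall_mem_of_position {S : Finset ℕ} {Q : ℕ → Prop} (h : InterlacedSeq r i j)
    (left : ∀ l < r, i l ∈ seqUnion r i P → i l ∉ seqUnion r j P → Q (i l))
    (right : ∀ l < r, j l ∉ seqUnion r i P → j l ∈ seqUnion r j P → Q (j l))
    (common : ∀ m ∈ P, m ∈ seqUnion r i P → m ∈ seqUnion r j P → Q m)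
    (outside : ∀ m ∈ S, m ∉ P → (∀ l < r, m ≠ i l ∧ m ≠ j l) →
      m ∉ seqUnion r i P → m ∉ seqUnion r j P → Q m) :
    ∀ m ∈ S, Q m := by
  have hne : ∀ l < r, ∀ l' < r, i l ≠ j l' := fun _ hl _ hl' ↦ h.left_ne_right hl hl'
  simp only [mem_seqUnion] at left right common outside
  intro m hm
  by_cases hmP : m ∈ P
  · exact common m hmP (.inr hmP) (.inr hmP)
  by_cases hmi : ∃ l < r, i l = m
  · obtain ⟨l, hl, rfl⟩ := hmi
    refine left l hl (.inl ⟨l, hl, rfl⟩) ?_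
    rintro (⟨l', hl', heq⟩ | hmem)
    exacts [hne l hl l' hl' heq.symm, hmP hmem]
  by_cases hmj : ∃ l < r, j l = m
  · obtain ⟨l, hl, rfl⟩ := hmj
    exact right l hl (not_or.2 ⟨hmi, hmP⟩) (.inl ⟨l, hl, rfl⟩)
  · exact outside m hm hmP
      (fun l hl ↦ ⟨fun heq ↦ hmi ⟨l, hl, heq.symm⟩, fun heq ↦ hmj ⟨l, hl, heq.symm⟩⟩)
      (not_or.2 ⟨hmi, hmP⟩) (not_or.2 ⟨hmj, hmP⟩)

end InterlacedSeq

section Arrows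

variable {n k : ℕ} {I J : Finset ℕ} {c : ℕ → R} {x y : ZMod n → M2}

/-- The matrix `x_m` of `𝕄(I, J)`, written uniformly in the position of `m` with respect to `I` and
`J`; its off-diagonal entry `c m` is `b_{2l-1}` at `m = i_l`, `b_{2l}` at `m = j_l`, and `0`
elsewhere. -/
def arrowX (I J : Finset ℕ) (c : ℕ → R) (m : ℕ) : M2 :=
  !![if m ∈ J then 1 else t, c m; 0, if m ∈ I then 1 else t]

/-- The matrix `y_m` of `𝕄(I, J)`, in the encoding of `arrowX`. -/
def arrowY (I J : Finset ℕ) (c : ℕ → R) (m : ℕ) : M2 :=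
  !![if m ∈ J then t else 1, -c m; 0, if m ∈ I then t else 1]

lemma arrowX_mul_arrowY {m : ℕ} (hc : m ∉ I ∆ J → c m = 0) :
    arrowX I J c m * arrowY I J c m = t • (1 : M2) := by
  by_cases hI : m ∈ I <;> by_cases hJ : m ∈ J <;>
    simp_all [arrowX, arrowY, mem_symmDiff, Matrix.one_fin_two, Matrix.smul_of, mul_comm]

lemma arrowY_mul_arrowX {m : ℕ} (hc : m ∉ I ∆ J → c m = 0) :
    arrowY I J c m * arrowX I J c m = t • (1 : M2) := by
  by_cases hI : m ∈ I <;> by_cases hJ : m ∈ J <;>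
    simp_all [arrowX, arrowY, mem_symmDiff, Matrix.one_fin_two, Matrix.smul_of, mul_comm]

lemma prod_ite_mem_one {α M : Type*} [DecidableEq α] [CommMonoid M] (S A : Finset α) (a : M) :
    ∏ m ∈ S, (if m ∈ A then 1 else a) = a ^ #(S \ A) := by
  rw [prod_ite, prod_const_one, one_mul, prod_const, filter_notMem_eq_sdiff]

lemma card_Icc_sdiff_add_card_filter_le (hI : 0 ∉ I) (s : ℕ) :
    #(Icc 1 s \ I) + #{a ∈ I | a ≤ s} = s := by
  have hinter : {a ∈ I | a ≤ s} = Icc 1 s ∩ I := by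
    ext a
    have hpos : a ∈ I → 1 ≤ a := fun ha ↦ Nat.pos_of_ne_zero (ne_of_mem_of_not_mem ha hI)
    simp only [mem_filter, mem_inter, mem_Icc]
    tauto
  rw [hinter, card_sdiff_add_card_inter, Nat.card_Icc, Nat.add_sub_cancel]

lemma TightlyInterlacing.card_Icc_sdiff_succ (h : TightlyInterlacing I J) (hI : 0 ∉ I)
    (hJ : 0 ∉ J) {s : ℕ} (hs : s + 1 ∈ I ∆ J) :
    #(Icc 1 (s + 1) \ J) = #(Icc 1 s \ I) + 1 := by
  have hcount := h (s + 1) hs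
  have hIs := card_Icc_sdiff_add_card_filter_le hI s
  have hJs := card_Icc_sdiff_add_card_filter_le hJ (s + 1)
  simp only [Nat.lt_succ_iff] at hcount
  omega

theorem TightlyInterlacing.pathProdX_zero_cycle (h : TightlyInterlacing I J)
    (hI : I ⊆ Icc 1 n) (hJ : J ⊆ Icc 1 n) (hIk : #I = k) (hJk : #J = k)
    (hc : ∀ m ∈ Icc 1 n, m ∉ I ∆ J → c m = 0) (hsum : ∑ m ∈ Icc 1 n, c m = 0)
    (hx : ∀ m ∈ Icc 1 n, x (m : ZMod n) = arrowX I J c m) :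
    pathProdX x 0 n = t ^ (n - k) • (1 : M2) := by
  refine smul_right_injective M2 t_ne_zero ?_
  have hzero : ∀ {A : Finset ℕ}, A ⊆ Icc 1 n → 0 ∉ A := fun hA h0 ↦ by simpa using hA h0
  have hbalance : ∀ s < n, c (s + 1) * (t * ∏ m ∈ Icc 1 s, if m ∈ I then 1 else t) =
      c (s + 1) * ∏ m ∈ Icc 1 (s + 1), if m ∈ J then 1 else t := by
    intro s hs
    by_cases hmem : s + 1 ∈ I ∆ J
    · rw [prod_ite_mem_one, prod_ite_mem_one, h.card_Icc_sdiff_succ (hzero hI) (hzero hJ) hmem,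
        pow_succ']
    · rw [hc (s + 1) (mem_Icc.2 ⟨s.succ_pos, hs⟩) hmem, zero_mul, zero_mul]
  have hcard : ∀ {A : Finset ℕ}, A ⊆ Icc 1 n → #A = k → #(Icc 1 n \ A) = n - k := by
    intro A hA hAk
    rw [card_sdiff_of_subset hA, Nat.card_Icc, hAk, Nat.add_sub_cancel]
  calc t • pathProdX x 0 n = !![t * t ^ (n - k), 0; 0, t * t ^ (n - k)] := by
        rw [smul_pathProdX_zero_of_upperTriangular hx hbalance, prod_ite_mem_one,
          prod_ite_mem_one, hcard hI hIk, hcard hJ hJk, hsum, mul_zero]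
    _ = t • t ^ (n - k) • (1 : M2) := by simp [Matrix.one_fin_two, Matrix.smul_of]

lemma exists_mem_Icc_natCast_eq [NeZero n] (m : ZMod n) : ∃ a ∈ Icc 1 n, (a : ZMod n) = m := by
  rcases Nat.eq_zero_or_pos m.val with h | h
  · exact ⟨n, right_mem_Icc.2 NeZero.one_le, by
      rw [ZMod.natCast_self, (ZMod.val_eq_zero m).1 h]⟩
  · exact ⟨m.val, mem_Icc.2 ⟨h, (ZMod.val_lt m).le⟩, ZMod.natCast_zmod_val m⟩

theorem TightlyInterlacing.module_relations [NeZero n] (h : TightlyInterlacing I J)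
    (hI : I ⊆ Icc 1 n) (hJ : J ⊆ Icc 1 n) (hIk : #I = k) (hJk : #J = k)
    (hc : ∀ m ∈ Icc 1 n, m ∉ I ∆ J → c m = 0) (hsum : ∑ m ∈ Icc 1 n, c m = 0)
    (hxy : ∀ m ∈ Icc 1 n, x (m : ZMod n) = arrowX I J c m ∧ y (m : ZMod n) = arrowY I J c m) :
    (∀ m, x m * y m = t • (1 : M2) ∧ y m * x m = t • (1 : M2)) ∧
      ∀ m, pathProdX x m k = pathProdY y m (n - k) := by
  have hrel : ∀ m, x m * y m = t • (1 : M2) ∧ y m * x m = t • (1 : M2) := by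
    intro m
    obtain ⟨a, ha, rfl⟩ := exists_mem_Icc_natCast_eq m
    rw [(hxy a ha).1, (hxy a ha).2]
    exact ⟨arrowX_mul_arrowY (hc a ha), arrowY_mul_arrowX (hc a ha)⟩
  have hkn : k ≤ n := by simpa [hIk] using card_le_card hI
  exact ⟨hrel, pathProdX_eq_pathProdY hkn (fun m ↦ (hrel m).1) (fun m ↦ (hrel m).2)
    (h.pathProdX_zero_cycle hI hJ hIk hJk hc hsum fun m hm ↦ (hxy m hm).1)⟩

end Arrows

theorem stmt0_general {n k r : ℕ} (hr : 1 ≤ r) (hrk : r ≤ k) {i j : ℕ → ℕ}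
    (hi1 : 1 ≤ i 0) (hjr : j (r - 1) ≤ n) (h : InterlacedSeq r i j)
    {P : Finset ℕ} (hP : P ⊆ Icc 1 n) (hPcard : #P = k - r)
    (hPdisj : ∀ l < r, i l ∉ P ∧ j l ∉ P)
    {b : ℕ → R} (hb : ∑ m ∈ Icc 1 (2 * r), b m = 0) {x y : ZMod n → M2}
    (hxI : ∀ l < r, x (i l) = !![t, b (2 * l + 1); 0, 1])
    (hxJ : ∀ l < r, x (j l) = !![1, b (2 * l + 2); 0, t])
    (hxP : ∀ m ∈ P, x m = 1)
    (hxO : ∀ m ∈ Icc 1 n, m ∉ P → (∀ l < r, m ≠ i l ∧ m ≠ j l) → x m = t • (1 : M2))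
    (hyI : ∀ l < r, y (i l) = !![1, -b (2 * l + 1); 0, t])
    (hyJ : ∀ l < r, y (j l) = !![t, -b (2 * l + 2); 0, 1])
    (hyP : ∀ m ∈ P, y m = t • (1 : M2))
    (hyO : ∀ m ∈ Icc 1 n, m ∉ P → (∀ l < r, m ≠ i l ∧ m ≠ j l) → y m = 1) :
    (∀ m, x m * y m = t • (1 : M2) ∧ y m * x m = t • (1 : M2)) ∧
      ∀ m, pathProdX x m k = pathProdY y m (n - k) := by
  have hi : ∀ l < r, i l ∈ Icc 1 n := fun l hl ↦ h.left_mem_Icc hi1 hjr hl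
  have hj : ∀ l < r, j l ∈ Icc 1 n := fun l hl ↦ h.right_mem_Icc hi1 hjr hl
  have : NeZero n := ⟨by have := mem_Icc.1 (hi 0 hr); omega⟩
  let c : ℕ → R := fun m ↦ x m 0 1
  have hxyc : ∀ m ∈ Icc 1 n,
      (x m = arrowX (seqUnion r i P) (seqUnion r j P) c m ∧
        y m = arrowY (seqUnion r i P) (seqUnion r j P) c m) ∧
      (m ∉ seqUnion r i P ∆ seqUnion r j P → c m = 0) := by
    refine h.forall_mem_of_position (P := P) (fun l hl hI hJ ↦ ?_) (fun l hl hI hJ ↦ ?_)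
      (fun m hm hI hJ ↦ ?_) (fun m hm hmP hmO hI hJ ↦ ?_)
    · simp [c, arrowX, arrowY, mem_symmDiff, hI, hJ, hxI l hl, hyI l hl]
    · simp [c, arrowX, arrowY, mem_symmDiff, hI, hJ, hxJ l hl, hyJ l hl]
    · simp [c, arrowX, arrowY, hI, hJ, hxP m hm, hyP m hm, one_fin_two, smul_of]
    · simp [c, arrowX, arrowY, hI, hJ, hxO m hm hmP hmO, hyO m hm hmP hmO, one_fin_two, smul_of]
  have hsum : ∑ m ∈ Icc 1 n, c m = 0 := by
    rw [h.sum_eq_sum_range hi hj fun m hm ↦ h.seqUnion_symmDiff hPdisj ▸ (hxyc m hm).2, ← hb,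
      sum_Icc_one_two_mul]
    exact sum_congr rfl fun l hl ↦ by simp [c, hxI l (mem_range.1 hl), hxJ l (mem_range.1 hl)]
  have hIk : #(seqUnion r i P) = k := by
    rw [card_seqUnion h.left_strictMonoOn.injOn fun l hl ↦ (hPdisj l hl).1, hPcard,
      Nat.add_sub_of_le hrk]
  have hJk : #(seqUnion r j P) = k := by
    rw [card_seqUnion h.right_strictMonoOn.injOn fun l hl ↦ (hPdisj l hl).2, hPcard,
      Nat.add_sub_of_le hrk]
  exact (h.tightlyInterlacing hPdisj).module_relations (seqUnion_subset hi hP)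
    (seqUnion_subset hj hP) hIk hJk (fun m hm ↦ (hxyc m hm).2) hsum fun m hm ↦ (hxyc m hm).1

/-- (Proposition 3.1.) The matrices `x_m`, `y_m` attached to the tightly `r`-interlacing
`k`-subsets `I = {i_1,…,i_r} ∪ P` and `J = {j_1,…,j_r} ∪ P` of `{1,…,n}` (with
`b_1 + ⋯ + b_{2r} = 0`) define a module in `CM(B_{k,n})`: `x_m y_m = y_m x_m = t·id`
for every vertex `m`, and `x^k = y^{n-k}` as maps out of every vertex `m`.
Here `i, j : ℕ → R` are `0`-indexed, so `i l, j l` for `l < r` are the paper's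
`i_{l+1}, j_{l+1}`, and `b (2*l+1), b (2*l+2)` are the paper's `b_{2(l+1)-1}, b_{2(l+1)}`. -/
theorem stmt0
    (n k r : ℕ) (hn : 6 ≤ n) (hr2 : 2 ≤ r) (hrk : r ≤ k) (hkrn : k + r ≤ n)
    (i j : ℕ → ℕ)
    (hi1 : 1 ≤ i 0) (hjr : j (r - 1) ≤ n)
    (hij : ∀ l, l < r → i l < j l)
    (hji : ∀ l, l + 1 < r → j l < i (l + 1))
    (P : Finset ℕ) (hP : P ⊆ Finset.Icc 1 n)
    (hPcard : P.card = k - r)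
    (hPdisj : ∀ l, l < r → i l ∉ P ∧ j l ∉ P)
    (b : ℕ → R) (hb : ∑ m ∈ Finset.Icc 1 (2 * r), b m = 0)
    (x y : ZMod n → M2)
    (hxI : ∀ l, l < r → x ((i l : ZMod n)) = !![t, b (2 * l + 1); 0, 1])
    (hxJ : ∀ l, l < r → x ((j l : ZMod n)) = !![1, b (2 * l + 2); 0, t])
    (hxP : ∀ m ∈ P, x ((m : ZMod n)) = 1)
    (hxO : ∀ m ∈ Finset.Icc 1 n, m ∉ P → (∀ l, l < r → m ≠ i l ∧ m ≠ j l) →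
      x ((m : ZMod n)) = t • (1 : M2))
    (hyI : ∀ l, l < r → y ((i l : ZMod n)) = !![1, -b (2 * l + 1); 0, t])
    (hyJ : ∀ l, l < r → y ((j l : ZMod n)) = !![t, -b (2 * l + 2); 0, 1])
    (hyP : ∀ m ∈ P, y ((m : ZMod n)) = t • (1 : M2))
    (hyO : ∀ m ∈ Finset.Icc 1 n, m ∉ P → (∀ l, l < r → m ≠ i l ∧ m ≠ j l) →
      y ((m : ZMod n)) = 1) :
    (∀ m : ZMod n, x m * y m = t • (1 : M2) ∧ y m * x m = t • (1 : M2)) ∧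
    (∀ m : ZMod n, pathProdX x m k = pathProdY y m (n - k)) :=
  stmt0_general (one_le_two.trans hr2) hrk hi1 hjr ⟨hij, hji⟩ hP hPcard hPdisj hb hxI hxJ hxP hxO
    hyI hyJ hyP hyO

end
end

section
/- (Proposition 3.2) Let (φ_1,…,φ_n) be an endomorphism family, write φ_{j_r} = [[a, b],[c, d]] with a, b, c, d ∈ R, and set B_m := b_1 + ⋯ + b_m for 1 ≤ m ≤ 2r. Then: (i) t divides c, say c = t·c'; (ii) for every l ∈ {1,…,r} the element (d−a)B_{2l} − B_{2l}²·c' is divisible by t, say (d−a)B_{2l} − B_{2l}²·c' = t·e_l; (iii) for every l ∈ {1,…,r}, φ_{i_l} = [[a + B_{2l−1}c', tb + (d−a)B_{2l−1} − B_{2l−1}²c'],[c', d − B_{2l−1}c']] and φ_{j_l} = [[a + B_{2l}c', b + e_l],[c, d − B_{2l}c']]; and (iv) φ_m = φ_{m−1} for every m ∈ P ∪ ({1,…,n}∖(I∪J)). -/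
open PowerSeries Matrix

noncomputable section

/-! For `2 × 2` matrices put `U B = !![1, B; 0, 1]` and `V B = !![1, B; 0, t]`. Then
`V β * U B = V (B + β)` and `!![t, β; 0, 1] * V B = t • U (B + β)`: walking around the quiver adds
up the `b_m`, apart from scalars `t`, which can be cancelled. With `φ_{j_r} = !![a, b₀; t * c', d]`,
the matrix `Ψ = !![a, t * b₀; c', d]` is intertwined with `φ_{j_r}` by `V 0`. Hence
`U B_{2l-1}` intertwines `Ψ` with `φ_{i_l}` and `V B_{2l}` intertwines `Ψ` with `φ_{j_l}`, and the
formulas are read off entrywise. Between consecutive positions of `I △ J` the family is constant,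
as the arrows there act by the scalars `1` and `t`. -/

section Intertwining

theorem semiconjBy_of_smul {S A : Type*} [Mul A] [SMul S A] [IsScalarTower S A A]
    [SMulCommClass S A A] {τ : S} (hτ : IsSMulRegular A τ) {u y z : A}
    (h : SemiconjBy (τ • u) y z) : SemiconjBy u y z :=
  hτ <| by simpa only [smul_mul_assoc, mul_smul_comm] using h.eq

variable {S : Type*} [CommRing S] {τ : S} {A A' Ψ : Matrix (Fin 2) (Fin 2) S} {B β : S}

theorem semiconjBy_scaledShear_add (h : SemiconjBy !![1, B; 0, 1] Ψ A)
    (hA : SemiconjBy !![1, β; 0, τ] A A') : SemiconjBy !![1, B + β; 0, τ] Ψ A' := by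
  simpa using hA.mul_left h

theorem semiconjBy_shear_add (hτ : IsLeftRegular τ) (h : SemiconjBy !![1, B; 0, τ] Ψ A)
    (hA : SemiconjBy !![τ, β; 0, 1] A A') : SemiconjBy !![1, B + β; 0, 1] Ψ A' := by
  have hmul : !![τ, β; 0, 1] * !![1, B; 0, τ] = τ • !![1, B + β; 0, 1] := by
    simp [mul_add, mul_comm β]
  exact semiconjBy_of_smul hτ.isSMulRegular.matrix (hmul ▸ hA.mul_left h)

theorem apply_one_zero_of_semiconjBy (h : SemiconjBy !![τ, β; 0, 1] A A') :
    A 1 0 = τ * A' 1 0 := by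
  simpa [Matrix.mul_apply, Fin.sum_univ_two, mul_comm] using congr_fun₂ h.eq 1 0

theorem semiconjBy_scaledShear_zero (a b c d : S) :
    SemiconjBy !![1, 0; 0, τ] !![a, τ * b; c, d] !![a, b; τ * c, d] := by
  simp [SemiconjBy, mul_comm]

theorem eq_of_semiconjBy_shear {a b c d : S} (h : SemiconjBy !![1, B; 0, 1] !![a, b; c, d] A) :
    A = !![a + B * c, b + (d - a) * B - B ^ 2 * c; c, d - B * c] := by
  have hinv : !![1, B; 0, 1] * !![1, -B; 0, 1] = 1 := by simp [one_fin_two]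
  calc A = A * !![1, B; 0, 1] * !![1, -B; 0, 1] := by rw [mul_assoc, hinv, mul_one]
    _ = !![1, B; 0, 1] * !![a, b; c, d] * !![1, -B; 0, 1] := by rw [h.eq]
    _ = !![a + B * c, b + (d - a) * B - B ^ 2 * c; c, d - B * c] := by
      simp only [mul_fin_two]
      ring_nf

theorem exists_eq_of_semiconjBy_scaledShear (hτ : IsLeftRegular τ) {a b c d : S}
    (h : SemiconjBy !![1, B; 0, τ] !![a, τ * b; c, d] A) :
    ∃ e, (d - a) * B - B ^ 2 * c = τ * e ∧ A = !![a + B * c, b + e; τ * c, d - B * c] := by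
  obtain ⟨p, q, u, v, rfl⟩ : ∃ p q u v, A = !![p, q; u, v] := ⟨_, _, _, _, A.eta_fin_two⟩
  obtain ⟨⟨hp, hq⟩, hu, hv⟩ : (a + B * c = p ∧ τ * b + B * d = p * B + q * τ) ∧
      τ * c = u ∧ τ * d = u * B + v * τ := by
    simpa [SemiconjBy] using h.eq
  have hv' : d - B * c = v := hτ <| by
    change τ * (d - B * c) = τ * v
    linear_combination hv - B * hu
  refine ⟨q - b, by linear_combination hq - B * hp, ?_⟩
  rw [hp, hu, hv', add_sub_cancel]

theorem semiconjBy_shear_of_chain (hτ : IsLeftRegular τ) {r : ℕ} {b B : ℕ → S} (hB₀ : B 0 = 0)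
    (hB : ∀ m, B (m + 1) = B m + b (m + 1)) {F G : ℕ → Matrix (Fin 2) (Fin 2) S}
    (hF : SemiconjBy !![1, 0; 0, τ] Ψ (F 0))
    (hFG : ∀ l < r, SemiconjBy !![τ, b (2 * l + 1); 0, 1] (F l) (G l))
    (hGF : ∀ l, l + 1 < r → SemiconjBy !![1, b (2 * l + 2); 0, τ] (G l) (F (l + 1))) :
    ∀ l < r, SemiconjBy !![1, B (2 * l + 1); 0, 1] Ψ (G l) := by
  have shear_of_scaledShear : ∀ l < r, SemiconjBy !![1, B (2 * l); 0, τ] Ψ (F l) →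
      SemiconjBy !![1, B (2 * l + 1); 0, 1] Ψ (G l) := fun l hl h ↦
    hB (2 * l) ▸ semiconjBy_shear_add hτ h (hFG l hl)
  have scaledShear : ∀ l < r, SemiconjBy !![1, B (2 * l); 0, τ] Ψ (F l) := by
    intro l
    induction l with
    | zero => simpa [hB₀] using fun _ ↦ hF
    | succ l ih =>
      intro hl
      have hG := shear_of_scaledShear l (by lia) (ih (by lia))
      simpa only [mul_add_one, hB (2 * l + 1)] using semiconjBy_scaledShear_add hG (hGF l hl)
  exact fun l hl ↦ shear_of_scaledShear l hl (scaledShear l hl)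

end Intertwining

section MarkedPositions

variable {α G : Type*} [AddGroupWithOne G]

theorem apply_natCast_eq_of_forall_Ioc {f : G → α} {p q : ℕ} (hpq : p ≤ q)
    (h : ∀ m ∈ Finset.Ioc p q, f m = f (m - 1)) : f q = f p := by
  induction q, hpq using Nat.le_induction with
  | base => rfl
  | succ q hpq ih =>
    calc f ((q + 1 : ℕ) : G) = f q := by simpa using h (q + 1) (Finset.mem_Ioc.2 (by lia))
      _ = f p := ih fun m hm ↦ h m (by rw [Finset.mem_Ioc] at hm ⊢; lia)

theorem apply_natCast_sub_one_eq_of_forall_Ioo {f : G → α} {p q : ℕ} (hpq : p < q)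
    (h : ∀ m ∈ Finset.Ioo p q, f m = f (m - 1)) : f (q - 1) = f p := by
  obtain ⟨q, rfl⟩ := Nat.exists_eq_add_one_of_ne_zero (Nat.ne_zero_of_lt hpq)
  simpa using apply_natCast_eq_of_forall_Ioc (Nat.le_of_lt_succ hpq)
    fun m hm ↦ h m (by simp only [Finset.mem_Ioc, Finset.mem_Ioo] at hm ⊢; lia)

variable {n N : ℕ} {s : ℕ → ℕ}

theorem apply_succ_sub_one_eq_of_strictMonoOn {f : G → α} (hs : StrictMonoOn s (Set.Iio N))
    (hn : s (N - 1) ≤ n) (hf : ∀ m ∈ Finset.Icc 1 n, (∀ k < N, m ≠ s k) → f m = f (m - 1))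
    {k : ℕ} (hk : k + 1 < N) : f (s (k + 1) - 1) = f (s k) := by
  refine apply_natCast_sub_one_eq_of_forall_Ioo
    (hs (Set.mem_Iio.2 (by lia)) hk k.lt_succ_self) fun m hm ↦ ?_
  have hk_last : s (k + 1) ≤ s (N - 1) :=
    hs.monotoneOn hk (Set.mem_Iio.2 (by lia)) (Nat.le_sub_one_of_lt hk)
  rw [Finset.mem_Ioo] at hm
  refine hf m (Finset.mem_Icc.2 (by lia)) fun k' hk' ↦ ?_
  obtain h | h : k' ≤ k ∨ k + 1 ≤ k' := by lia
  · have := hs.monotoneOn hk' (Set.mem_Iio.2 (by lia)) h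
    lia
  · have := hs.monotoneOn hk hk' h
    lia

theorem apply_zero_sub_one_eq_of_strictMonoOn {f : ZMod n → α} (hs : StrictMonoOn s (Set.Iio N))
    (h₀ : 1 ≤ s 0) (hn : s (N - 1) ≤ n)
    (hf : ∀ m ∈ Finset.Icc 1 n, (∀ k < N, m ≠ s k) → f m = f (m - 1)) (hN : 0 < N) :
    f (s 0 - 1) = f (s (N - 1)) := by
  have h_last : s 0 ≤ s (N - 1) := hs.monotoneOn hN (Set.mem_Iio.2 (by lia)) (Nat.zero_le _)
  calc f (s 0 - 1) = f (0 : ℕ) := by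
        refine apply_natCast_sub_one_eq_of_forall_Ioo h₀ fun m hm ↦ ?_
        rw [Finset.mem_Ioo] at hm
        refine hf m (Finset.mem_Icc.2 (by lia)) fun k hk ↦ ?_
        have := hs.monotoneOn hN hk k.zero_le
        lia
    _ = f n := by simp
    _ = f (s (N - 1)) := by
        refine apply_natCast_eq_of_forall_Ioc hn fun m hm ↦ ?_
        rw [Finset.mem_Ioc] at hm
        refine hf m (Finset.mem_Icc.2 (by lia)) fun k hk ↦ ?_
        have := hs.monotoneOn hk (Set.mem_Iio.2 (by lia)) (Nat.le_sub_one_of_lt hk)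
        lia

end MarkedPositions

section Interleave

/-- The sequence `i 0, j 0, i 1, j 1, …`: for tightly interlacing `I` and `J`, the elements of
`I △ J` in increasing order. -/
def interleave (i j : ℕ → ℕ) (k : ℕ) : ℕ :=
  if Even k then i (k / 2) else j (k / 2)

variable {i j : ℕ → ℕ} {r : ℕ}

theorem interleave_two_mul (i j : ℕ → ℕ) (l : ℕ) : interleave i j (2 * l) = i l := by
  simp [interleave]

theorem interleave_two_mul_add_one (i j : ℕ → ℕ) (l : ℕ) :
    interleave i j (2 * l + 1) = j l := by
  simp [interleave, Nat.mul_add_div]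

theorem interleave_two_mul_add_two (i j : ℕ → ℕ) (l : ℕ) :
    interleave i j (2 * l + 1 + 1) = i (l + 1) :=
  interleave_two_mul i j (l + 1)

theorem strictMonoOn_interleave (hij : ∀ l < r, i l < j l)
    (hji : ∀ l, l + 1 < r → j l < i (l + 1)) :
    StrictMonoOn (interleave i j) (Set.Iio (2 * r)) := by
  refine strictMonoOn_of_lt_add_one Set.ordConnected_Iio fun k _ _ hk ↦ ?_
  rw [Set.mem_Iio] at hk
  obtain ⟨l, rfl | rfl⟩ := k.even_or_odd'
  · rw [interleave_two_mul, interleave_two_mul_add_one]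
    exact hij l (by lia)
  · rw [interleave_two_mul_add_one, interleave_two_mul_add_two]
    exact hji l (by lia)

theorem forall_ne_of_forall_ne_interleave {m : ℕ} (h : ∀ k < 2 * r, m ≠ interleave i j k) :
    ∀ l < r, m ≠ i l ∧ m ≠ j l := fun l hl ↦
  ⟨interleave_two_mul i j l ▸ h (2 * l) (by lia),
    interleave_two_mul_add_one i j l ▸ h (2 * l + 1) (by lia)⟩

theorem apply_sub_one_eq_of_interlacing {α : Type*} {n : ℕ} {f : ZMod n → α} (hr : 0 < r)
    (hi : 1 ≤ i 0) (hj : j (r - 1) ≤ n) (hij : ∀ l < r, i l < j l)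
    (hji : ∀ l, l + 1 < r → j l < i (l + 1))
    (hf : ∀ m ∈ Finset.Icc 1 n, (∀ l < r, m ≠ i l ∧ m ≠ j l) → f m = f (m - 1)) :
    f (i 0 - 1) = f (j (r - 1)) ∧ (∀ l, l + 1 < r → f (i (l + 1) - 1) = f (j l)) ∧
      ∀ l < r, f (j l - 1) = f (i l) := by
  have hs := strictMonoOn_interleave hij hji
  have hfirst : interleave i j 0 = i 0 := interleave_two_mul i j 0
  have hlast : interleave i j (2 * r - 1) = j (r - 1) := by
    rw [show 2 * r - 1 = 2 * (r - 1) + 1 by lia, interleave_two_mul_add_one]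
  have hn : interleave i j (2 * r - 1) ≤ n := hlast ▸ hj
  have hconst : ∀ m ∈ Finset.Icc 1 n, (∀ k < 2 * r, m ≠ interleave i j k) → f m = f (m - 1) :=
    fun m hm h ↦ hf m hm (forall_ne_of_forall_ne_interleave h)
  refine ⟨?_, fun l hl ↦ ?_, fun l hl ↦ ?_⟩
  · simpa only [hfirst, hlast] using
      apply_zero_sub_one_eq_of_strictMonoOn hs (hfirst ▸ hi) hn hconst (by lia)
  · simpa only [interleave_two_mul_add_one, interleave_two_mul_add_two] using
      apply_succ_sub_one_eq_of_strictMonoOn hs hn hconst (k := 2 * l + 1) (by lia)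
  · simpa only [interleave_two_mul, interleave_two_mul_add_one] using
      apply_succ_sub_one_eq_of_strictMonoOn hs hn hconst (k := 2 * l) (by lia)

end Interleave

theorem stmt3_general {S : Type*} [CommRing S] {τ : S} (hτ : IsLeftRegular τ) {n r : ℕ}
    (hr : 0 < r) {i j : ℕ → ℕ} (hi1 : 1 ≤ i 0) (hjr : j (r - 1) ≤ n)
    (hij : ∀ l < r, i l < j l) (hji : ∀ l, l + 1 < r → j l < i (l + 1)) {P : Set ℕ}
    {b B : ℕ → S} (hB₀ : B 0 = 0) (hB : ∀ m, B (m + 1) = B m + b (m + 1))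
    {x : ZMod n → Matrix (Fin 2) (Fin 2) S}
    (hxI : ∀ l < r, x (i l) = !![τ, b (2 * l + 1); 0, 1])
    (hxJ : ∀ l < r, x (j l) = !![1, b (2 * l + 2); 0, τ])
    (hxP : ∀ m ∈ P, x (m : ℕ) = 1)
    (hxO : ∀ m ∈ Finset.Icc 1 n, m ∉ P → (∀ l < r, m ≠ i l ∧ m ≠ j l) → x m = τ • 1)
    {φ : ZMod n → Matrix (Fin 2) (Fin 2) S} (hφ : ∀ m, SemiconjBy (x m) (φ (m - 1)) (φ m))
    {a b₀ c d : S} (hφjr : φ (j (r - 1)) = !![a, b₀; c, d]) :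
    ∃ c', c = τ * c' ∧
      (∀ l < r, φ (i l) =
        !![a + B (2 * l + 1) * c',
           τ * b₀ + (d - a) * B (2 * l + 1) - B (2 * l + 1) ^ 2 * c';
           c', d - B (2 * l + 1) * c']) ∧
      (∀ l < r, ∃ e, (d - a) * B (2 * l + 2) - B (2 * l + 2) ^ 2 * c' = τ * e ∧
        φ (j l) = !![a + B (2 * l + 2) * c', b₀ + e; c, d - B (2 * l + 2) * c']) ∧
      ∀ m ∈ Finset.Icc 1 n, (m ∈ P ∨ ∀ l < r, m ≠ i l ∧ m ≠ j l) → φ m = φ (m - 1) := by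
  have hconst : ∀ m ∈ Finset.Icc 1 n, (m ∈ P ∨ ∀ l < r, m ≠ i l ∧ m ≠ j l) →
      φ m = φ (m - 1) := by
    intro m hm h
    have hone : SemiconjBy 1 (φ (m - 1)) (φ m) := by
      by_cases hmP : m ∈ P
      · exact hxP m hmP ▸ hφ m
      · exact semiconjBy_of_smul hτ.isSMulRegular.matrix
          (hxO m hm hmP (h.resolve_left hmP) ▸ hφ m)
    simpa using hone.eq.symm
  obtain ⟨hprev_i_zero, hprev_i_succ, hprev_j⟩ :=
    apply_sub_one_eq_of_interlacing hr hi1 hjr hij hji fun m hm h ↦ hconst m hm (.inr h)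
  have hI : ∀ l < r, SemiconjBy !![τ, b (2 * l + 1); 0, 1] (φ (i l - 1)) (φ (i l)) :=
    fun l hl ↦ hxI l hl ▸ hφ (i l)
  have hJ : ∀ l < r, SemiconjBy !![1, b (2 * l + 2); 0, τ] (φ (i l)) (φ (j l)) :=
    fun l hl ↦ hxJ l hl ▸ hprev_j l hl ▸ hφ (j l)
  obtain ⟨c', rfl⟩ : ∃ c', c = τ * c' :=
    ⟨φ (i 0) 1 0, by
      simpa [hprev_i_zero, hφjr] using apply_one_zero_of_semiconjBy (hI 0 hr)⟩
  have hstart : SemiconjBy !![1, 0; 0, τ] !![a, τ * b₀; c', d] (φ (i 0 - 1)) := by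
    simpa only [hprev_i_zero, hφjr] using semiconjBy_scaledShear_zero a b₀ c' d
  have hshear := semiconjBy_shear_of_chain hτ hB₀ hB hstart hI
    fun l hl ↦ hprev_i_succ l hl ▸ hJ l (by lia)
  exact ⟨c', rfl, fun l hl ↦ eq_of_semiconjBy_shear (hshear l hl),
    fun l hl ↦ exists_eq_of_semiconjBy_scaledShear hτ <|
      hB (2 * l + 1) ▸ semiconjBy_scaledShear_add (hshear l hl) (hJ l hl), hconst⟩

/-- (Proposition 3.2.) Let `(φ_1,…,φ_n)` be an endomorphism family of the module
`𝕄(I,J)` attached to tightly `r`-interlacing `k`-subsets `I, J` of `{1,…,n}`, and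
write `φ_{j_r} = [[a, b₀],[c, d]]`.  With `B m := b_1 + ⋯ + b_m`, one has:
(i) `t ∣ c`, say `c = t·c'`;
(ii)–(iii) for every `l`, `t ∣ (d−a)·B_{2l} − B_{2l}²·c'`, say `= t·e_l`, and
`φ_{i_l} = [[a + B_{2l−1} c', t b₀ + (d−a) B_{2l−1} − B_{2l−1}² c'],[c', d − B_{2l−1} c']]`,
`φ_{j_l} = [[a + B_{2l} c', b₀ + e_l],[c, d − B_{2l} c']]`;
(iv) `φ_m = φ_{m−1}` for every `m ∈ P ∪ ({1,…,n} ∖ (I ∪ J))`.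
Here `i, j : ℕ → ℕ` are `0`-indexed, so `i l, j l` for `l < r` are the paper's
`i_{l+1}, j_{l+1}`, and `b (2*l+1), b (2*l+2)` are the paper's `b_{2(l+1)-1}, b_{2(l+1)}`. -/
theorem stmt3
    (n k r : ℕ) (hn : 6 ≤ n) (hr2 : 2 ≤ r) (hrk : r ≤ k) (hkrn : k + r ≤ n)
    (i j : ℕ → ℕ)
    (hi1 : 1 ≤ i 0) (hjr : j (r - 1) ≤ n)
    (hij : ∀ l, l < r → i l < j l)
    (hji : ∀ l, l + 1 < r → j l < i (l + 1))
    (P : Finset ℕ) (hP : P ⊆ Finset.Icc 1 n)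
    (hPcard : P.card = k - r)
    (hPdisj : ∀ l, l < r → i l ∉ P ∧ j l ∉ P)
    (b : ℕ → R) (hb : ∑ m ∈ Finset.Icc 1 (2 * r), b m = 0)
    (x : ZMod n → M2)
    (hxI : ∀ l, l < r → x ((i l : ZMod n)) = !![t, b (2 * l + 1); 0, 1])
    (hxJ : ∀ l, l < r → x ((j l : ZMod n)) = !![1, b (2 * l + 2); 0, t])
    (hxP : ∀ m ∈ P, x ((m : ZMod n)) = 1)
    (hxO : ∀ m ∈ Finset.Icc 1 n, m ∉ P → (∀ l, l < r → m ≠ i l ∧ m ≠ j l) →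
      x ((m : ZMod n)) = t • (1 : M2))
    (φ : ZMod n → M2)
    (hφ : ∀ m : ZMod n, x m * φ (m - 1) = φ m * x m)
    (a b₀ c d : R)
    (hφjr : φ ((j (r - 1) : ZMod n)) = !![a, b₀; c, d]) :
    ∃ c' : R, c = t * c' ∧
      (∀ l, l < r →
        φ ((i l : ZMod n)) =
          !![a + (∑ g ∈ Finset.Icc 1 (2 * l + 1), b g) * c',
             t * b₀ + (d - a) * (∑ g ∈ Finset.Icc 1 (2 * l + 1), b g)
               - (∑ g ∈ Finset.Icc 1 (2 * l + 1), b g) ^ 2 * c';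
             c', d - (∑ g ∈ Finset.Icc 1 (2 * l + 1), b g) * c']) ∧
      (∀ l, l < r → ∃ e : R,
        (d - a) * (∑ g ∈ Finset.Icc 1 (2 * l + 2), b g)
            - (∑ g ∈ Finset.Icc 1 (2 * l + 2), b g) ^ 2 * c' = t * e ∧
        φ ((j l : ZMod n)) =
          !![a + (∑ g ∈ Finset.Icc 1 (2 * l + 2), b g) * c', b₀ + e;
             c, d - (∑ g ∈ Finset.Icc 1 (2 * l + 2), b g) * c']) ∧
      (∀ m ∈ Finset.Icc 1 n, (m ∈ P ∨ ∀ l, l < r → m ≠ i l ∧ m ≠ j l) →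
        φ ((m : ZMod n)) = φ ((m : ZMod n) - 1)) := by
  exact stmt3_general (P := P) (B := fun m ↦ ∑ g ∈ Finset.Icc 1 m, b g)
    (IsRegular.of_ne_zero PowerSeries.X_ne_zero).left (by lia) hi1 hjr hij hji (by simp)
    (fun m ↦ Finset.sum_Icc_succ_top (by lia) b) hxI hxJ hxP hxO hφ hφjr

end
end

section
/- (Theorem 3.3, indecomposability criterion) Set s_l := b_{2l−1} + b_{2l} for l = 1,…,r. The following are equivalent: (1) every endomorphism family (φ_1,…,φ_n) with φ_m² = φ_m for all m is trivial, i.e. either φ_m = 0 for all m or φ_m = identity for all m (equivalently, the module 𝕄(I,J) is indecomposable); (2) there exist indices 1 ≤ l₁ < l₂ ≤ r such that t ∤ s_{l₁}, t ∤ s_{l₂}, t divides s_l for every l with l₁ < l < l₂, and t ∤ s_{l₁} + s_{l₂}. -/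
open PowerSeries Matrix

noncomputable section

/-!
Up to nonzero scalars, the composite of the arrows from vertex `0` to vertex `m` is
`!![t, S l; 0, t]` when `m` lies after `l` of the blocks `[i q, j q)` and in none of them, and
`!![t, *; 0, 1]` when it lies in a block; here `S l = s₁ + ⋯ + s_l`. An endomorphism is therefore
a single matrix `M` at vertex `0` such that `M 1 0 = t * u` for some `u` and `t` divides
`S l * (M 1 1 - M 0 0 - S l * u)` for all `l`.

A nontrivial idempotent `M` has `(M 1 1 - M 0 0) ^ 2 ≡ 1` modulo `t`, so that `u` may be rescaled
to achieve `t ∣ S l * (1 - S l * u)` for all `l`; conversely such a `u` gives the idempotent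
`!![0, 0; t * u, 1]`. Over the residue field this says that `S 0 = 0, S 1, …, S r` take at most one
nonzero value. The first departure from this pattern is a pair of consecutive nonzero jumps
`s_{l₁}`, `s_{l₂}` which do not cancel.
-/

section TwoValued

theorem forall_le_eq_or_exists_last_ne {α : Type*} (S : ℕ → α) (r : ℕ) :
    (∀ l ≤ r, S l = S r) ∨ ∃ m < r, S m ≠ S r ∧ ∀ l, m < l → l ≤ r → S l = S r := by
  induction r with
  | zero => exact Or.inl fun l hl ↦ by rw [Nat.le_zero.mp hl]
  | succ r ih => grind

theorem eq_of_forall_eq_succ {α : Type*} {S : ℕ → α} {m₁ m₂ : ℕ} (hlt : m₁ < m₂)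
    (hflat : ∀ l, m₁ < l → l < m₂ → S l = S (l + 1)) : S (m₁ + 1) = S m₂ := by
  induction m₂, hlt using Nat.le_induction with
  | base => rfl
  | succ m hm ih => exact (ih fun l hl hlm ↦ hflat l hl (by lia)).trans (hflat m hm (by lia))

theorem exists_forall_le_eq_or_eq_iff {α : Type*} (S : ℕ → α) (r : ℕ) :
    (∃ a, ∀ l ≤ r, S l = S 0 ∨ S l = a) ↔
      ∀ m₁ m₂, m₁ < m₂ → m₂ < r → S m₁ ≠ S (m₁ + 1) → S m₂ ≠ S (m₂ + 1) →
        (∀ l, m₁ < l → l < m₂ → S l = S (l + 1)) → S m₁ = S (m₂ + 1) := by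
  constructor
  · rintro ⟨a, ha⟩ m₁ m₂ hlt hr hne₁ hne₂ hflat
    have hmid := eq_of_forall_eq_succ hlt hflat
    have h₁ := ha m₁ (by lia)
    have h₂ := ha m₂ hr.le
    have h₃ := ha (m₂ + 1) hr
    grind
  · intro hreturn
    induction r with
    | zero => exact ⟨S 0, fun l hl ↦ Or.inl (by rw [Nat.le_zero.mp hl])⟩
    | succ r ih =>
      obtain ⟨a, ha⟩ := ih fun m₁ m₂ hlt hr ↦ hreturn m₁ m₂ hlt (by lia)
      rcases forall_le_eq_or_exists_last_ne S r with hconst | ⟨m, hmr, hne, hflat⟩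
      · exact ⟨S (r + 1), by grind⟩
      · refine ⟨a, fun l hl ↦ ?_⟩
        rcases Nat.le_succ_iff.mp hl with hl | rfl
        · exact ha l hl
        by_cases hstay : S r = S (r + 1)
        · exact hstay ▸ ha r le_rfl
        · have hback : S m = S (r + 1) := hreturn m r hmr (by lia) (by grind) hstay (by grind)
          exact hback ▸ ha m hmr.le

theorem exists_forall_sum_Icc_eq_zero_or_eq_iff {G : Type*} [AddCommGroup G] (s : ℕ → G) (r : ℕ) :
    (∃ a, ∀ l ≤ r, ∑ q ∈ Finset.Icc 1 l, s q = 0 ∨ ∑ q ∈ Finset.Icc 1 l, s q = a) ↔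
      ¬∃ l₁ l₂, 1 ≤ l₁ ∧ l₁ < l₂ ∧ l₂ ≤ r ∧ s l₁ ≠ 0 ∧ s l₂ ≠ 0 ∧
        (∀ l, l₁ < l → l < l₂ → s l = 0) ∧ s l₁ + s l₂ ≠ 0 := by
  let S : ℕ → G := fun l ↦ ∑ q ∈ Finset.Icc 1 l, s q
  have hsucc : ∀ l, S (l + 1) = S l + s (l + 1) := fun l ↦ Finset.sum_Icc_succ_top (by lia) s
  have hstay : ∀ l, S l = S (l + 1) ↔ s (l + 1) = 0 := fun l ↦ by simp [hsucc]
  have hreturn : ∀ {m₁ m₂}, m₁ < m₂ → (∀ l, m₁ < l → l < m₂ → S l = S (l + 1)) →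
      (S m₁ = S (m₂ + 1) ↔ s (m₁ + 1) + s (m₂ + 1) = 0) := fun {m₁ m₂} hlt hflat ↦ by
    rw [hsucc m₂, ← eq_of_forall_eq_succ hlt hflat, hsucc m₁, add_assoc, left_eq_add]
  refine (exists_forall_le_eq_or_eq_iff S r).trans ⟨?_, fun h m₁ m₂ hlt hr hne₁ hne₂ hflat ↦ ?_⟩
  · rintro h ⟨_ | m₁, _ | m₂, h1, hlt, hr, hne₁, hne₂, hzero, hsum⟩
    any_goals lia
    have hflat : ∀ l, m₁ < l → l < m₂ → S l = S (l + 1) := fun l hl hl' ↦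
      (hstay l).mpr (hzero (l + 1) (by lia) (by lia))
    have hback := h m₁ m₂ (by lia) (by lia) (mt (hstay _).mp hne₁) (mt (hstay _).mp hne₂) hflat
    exact hsum ((hreturn (by lia) hflat).mp hback)
  · by_contra hne
    refine h ⟨m₁ + 1, m₂ + 1, by lia, by lia, hr, mt (hstay _).mpr hne₁, mt (hstay _).mpr hne₂,
      fun l hl hl' ↦ ?_, mt (hreturn hlt hflat).mpr hne⟩
    obtain ⟨m, rfl⟩ : ∃ m, l = m + 1 := ⟨l - 1, by lia⟩
    exact (hstay m).mp (hflat m (by lia) (by lia))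

end TwoValued

section IdempotentMatrices

variable {A : Type*} [CommRing A] [IsDomain A]

theorem sq_diag_sub_eq_of_isIdempotentElem {M : Matrix (Fin 2) (Fin 2) A}
    (hM : IsIdempotentElem M) (h0 : M ≠ 0) (h1 : M ≠ 1) :
    (M 1 1 - M 0 0) ^ 2 = 1 - 4 * (M 0 1 * M 1 0) := by
  have hdet₀₁ : M.det = 0 ∨ M.det = 1 :=
    IsIdempotentElem.iff_eq_zero_or_one.mp (by simpa using hM.map detMonoidHom)
  have hdet : M.det = 0 := hdet₀₁.resolve_right fun h ↦
    h1 ((IsIdempotentElem.iff_eq_one_of_isUnit (by simp [M.isUnit_iff_isUnit_det, h])).mp hM)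
  have hcayley : M * M = M.trace • M - M.det • 1 := by
    ext p q
    fin_cases p <;> fin_cases q <;>
      simp [mul_apply, Fin.sum_univ_two, trace_fin_two, det_fin_two] <;> ring
  have htrace : M.trace = 1 := by
    have : (M.trace - 1) • M = 0 := by
      rw [sub_smul, one_smul, sub_eq_zero]
      simpa only [hdet, zero_smul, sub_zero, hM.eq] using hcayley.symm
    exact sub_eq_zero.mp ((smul_eq_zero.mp this).resolve_right h0)
  rw [trace_fin_two] at htrace
  rw [det_fin_two] at hdet
  linear_combination (M 0 0 + M 1 1 + 1) * htrace - 4 * hdet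

theorem exists_isIdempotentElem_iff_exists_dvd (ϖ : A) (T : Set A) :
    (∃ M : Matrix (Fin 2) (Fin 2) A, IsIdempotentElem M ∧ M ≠ 0 ∧ M ≠ 1 ∧
        ∃ u, M 1 0 = ϖ * u ∧ ∀ s ∈ T, ϖ ∣ s * (M 1 1 - M 0 0 - s * u)) ↔
      ∃ u, ∀ s ∈ T, ϖ ∣ s * (1 - s * u) := by
  constructor
  · rintro ⟨M, hM, h0, h1, u, hu, hT⟩
    have hsq := sq_diag_sub_eq_of_isIdempotentElem hM h0 h1
    refine ⟨u * (M 1 1 - M 0 0), fun s hs ↦ ?_⟩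
    obtain ⟨c, hc⟩ := hT s hs
    refine ⟨c * (M 1 1 - M 0 0) + 4 * s * M 0 1 * u, ?_⟩
    linear_combination (M 1 1 - M 0 0) * hc - s * hsq + 4 * s * M 0 1 * hu
  · rintro ⟨u, hT⟩
    refine ⟨!![0, 0; ϖ * u, 1], ?_, fun h ↦ ?_, fun h ↦ ?_, u, by simp, by simpa using hT⟩
    · ext p q
      fin_cases p <;> fin_cases q <;> simp [mul_apply, Fin.sum_univ_two]
    · simpa using congr_fun₂ h 1 1
    · simpa using congr_fun₂ h 0 0

end IdempotentMatrices

section Residue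

-- Junk value: for `u = 0` both sides say `s = 0`, since `0⁻¹ = 0`.
theorem mul_one_sub_mul_eq_zero_iff {K : Type*} [Field K] (s u : K) :
    s * (1 - s * u) = 0 ↔ s = 0 ∨ s = u⁻¹ := by
  rcases eq_or_ne u 0 with rfl | hu
  · simp
  · rw [mul_eq_zero, sub_eq_zero, eq_comm (a := (1 : K)), mul_eq_one_iff_eq_inv₀ hu]

theorem exists_dvd_mul_one_sub_mul_iff {A K : Type*} [CommRing A] [Field K] {π : A →+* K} {ϖ : A}
    (hπ : Function.Surjective π) (hker : ∀ f, π f = 0 ↔ ϖ ∣ f) (T : Set A) :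
    (∃ u, ∀ s ∈ T, ϖ ∣ s * (1 - s * u)) ↔ ∃ a, ∀ s ∈ T, π s = 0 ∨ π s = a := by
  simp only [← hker, map_mul, map_sub, map_one, mul_one_sub_mul_eq_zero_iff]
  rw [← hπ.exists (p := fun u ↦ ∀ s ∈ T, π s = 0 ∨ π s = u⁻¹)]
  exact ((inv_surjective (G := K)).exists (p := fun a ↦ ∀ s ∈ T, π s = 0 ∨ π s = a)).symm

end Residue

section CyclicQuiver

/-- Indecomposability of the representation of the cyclic quiver with vertices `ZMod n` whose
arrow `m - 1 → m` acts by `x m`: its only idempotent endomorphisms are zero and the identity. -/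
def CyclicIndecomposable {n : ℕ} {S : Type*} [MonoidWithZero S] (x : ZMod n → S) : Prop :=
  ∀ φ : ZMod n → S, (∀ m, x m * φ (m - 1) = φ m * x m) → (∀ m, φ m * φ m = φ m) →
    (∀ m, φ m = 0) ∨ ∀ m, φ m = 1

/-- The composite `x m * ⋯ * x 1` of the first `m` arrows, starting at the vertex `0`. -/
def transport {n : ℕ} {S : Type*} [Monoid S] (x : ZMod n → S) : ℕ → S
  | 0 => 1
  | m + 1 => x (m + 1 : ℕ) * transport x m

variable {n : ℕ} {S : Type*}

theorem semiconjBy_transport [Monoid S] {x φ : ZMod n → S}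
    (hφ : ∀ m, x m * φ (m - 1) = φ m * x m) (m : ℕ) :
    SemiconjBy (transport x m) (φ 0) (φ m) := by
  induction m with
  | zero => simp [transport]
  | succ m ih =>
    have hstep : SemiconjBy (x (m + 1 : ℕ)) (φ m) (φ (m + 1 : ℕ)) := by
      simpa [SemiconjBy] using hφ (m + 1 : ℕ)
    exact hstep.mul_left ih

theorem exists_endomorphism_of_semiconjBy_transport [Monoid S] [NeZero n] {x : ZMod n → S}
    (hreg : ∀ m ≤ n, IsRightRegular (transport x m)) (hcomm : ∀ M, Commute (transport x n) M)
    {M : S} (hM : ∀ m ≤ n, ∃ B, SemiconjBy (transport x m) M B) :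
    ∃ φ : ZMod n → S, φ 0 = M ∧ (∀ m, x m * φ (m - 1) = φ m * x m) ∧
      ∀ z, SemiconjBy (transport x z.val) M (φ z) := by
  choose! Φ hΦ using hM
  have hΦ₀ : Φ 0 = M := by simpa [transport, SemiconjBy] using (hΦ 0 (Nat.zero_le n)).symm
  have hΦₙ : Φ n = M := hreg n le_rfl ((hΦ n le_rfl).eq.symm.trans (hcomm M).eq)
  refine ⟨fun z ↦ Φ z.val, by simpa using hΦ₀, fun z ↦ ?_, fun z ↦ hΦ z.val z.val_lt.le⟩
  obtain ⟨m, hm, rfl⟩ : ∃ m < n, z = (m + 1 : ℕ) := ⟨(z - 1).val, (z - 1).val_lt, by simp⟩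
  have hpred : ((m + 1 : ℕ) - 1 : ZMod n).val = m := by simp [ZMod.val_cast_of_lt hm]
  have hsucc : Φ ((m + 1 : ℕ) : ZMod n).val = Φ (m + 1) := by
    rcases Nat.lt_or_eq_of_le (Nat.succ_le_of_lt hm) with hlt | heq
    · rw [ZMod.val_cast_of_lt hlt]
    · rw [← Nat.succ_eq_add_one, heq, ZMod.natCast_self, ZMod.val_zero, hΦ₀, hΦₙ]
  apply hreg m hm.le
  simp only [hpred, hsucc, mul_assoc]
  rw [← (hΦ m hm.le).eq, ← mul_assoc]
  exact (hΦ (m + 1) hm).eq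

theorem cyclicIndecomposable_iff [MonoidWithZero S] [NeZero n] {x : ZMod n → S}
    (hreg : ∀ m ≤ n, IsRightRegular (transport x m)) (hcomm : ∀ M, Commute (transport x n) M) :
    CyclicIndecomposable x ↔
      ∀ M, IsIdempotentElem M → (∀ m ≤ n, ∃ B, SemiconjBy (transport x m) M B) →
        M = 0 ∨ M = 1 := by
  constructor
  · intro hx M hM hB
    obtain ⟨φ, hφ₀, hφ, hconj⟩ := exists_endomorphism_of_semiconjBy_transport hreg hcomm hB
    have hidem : ∀ z, φ z * φ z = φ z := fun z ↦ hreg _ z.val_lt.le <| by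
      simpa only [hM.eq, (hconj z).eq] using ((hconj z).mul_right (hconj z)).eq.symm
    exact (hx φ hφ hidem).imp (fun h ↦ hφ₀ ▸ h 0) fun h ↦ hφ₀ ▸ h 0
  · intro hM φ hφ hidem
    have hconj : ∀ z : ZMod n, φ z * transport x z.val = transport x z.val * φ 0 := fun z ↦ by
      simpa using (semiconjBy_transport hφ z.val).eq.symm
    refine (hM (φ 0) (hidem 0) fun m _ ↦ ⟨_, semiconjBy_transport hφ m⟩).imp
      (fun h z ↦ ?_) fun h z ↦ ?_
    all_goals
      apply hreg z.val z.val_lt.le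
      simp [hconj, h]

end CyclicQuiver

section TightInterlacing

/-- The positions `1 ≤ i 0 < j 0 < i 1 < j 1 < ⋯ < i (r - 1) < j (r - 1) ≤ n` of the elements of
`I ∖ J` and `J ∖ I` for tightly `r`-interlacing subsets `I, J` of `{1, …, n}`, indexed from `0`. -/
structure TightlyInterlaced (n r : ℕ) (i j : ℕ → ℕ) : Prop where
  pos : 0 < r
  one_le_first : 1 ≤ i 0
  lt : ∀ l < r, i l < j l
  lt_succ : ∀ l, l + 1 < r → j l < i (l + 1)
  last_le : j (r - 1) ≤ n

/-- The position `m` lies after exactly `l` of the blocks `[i q, j q)` and in none of them. -/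
def IsBetweenBlocks (r : ℕ) (i j : ℕ → ℕ) (l m : ℕ) : Prop :=
  l ≤ r ∧ (∀ q < l, j q ≤ m) ∧ ∀ q, l ≤ q → q < r → m < i q

/-- The position `m` lies in the block `[i l, j l)`. -/
def IsInBlock (r : ℕ) (i j : ℕ → ℕ) (l m : ℕ) : Prop :=
  l < r ∧ i l ≤ m ∧ m < j l

variable {n r l m : ℕ} {i j : ℕ → ℕ}

namespace TightlyInterlaced

theorem lt_of_lt (h : TightlyInterlaced n r i j) {l l' : ℕ} (hlt : l < l') (hr : l' < r) :
    j l < i l' := by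
  induction l', hlt using Nat.le_induction with
  | base => exact h.lt_succ l hr
  | succ q _ ih =>
    exact (ih (by lia)).trans ((h.lt q (by lia)).trans (h.lt_succ q hr))

theorem one_le (h : TightlyInterlaced n r i j) (hl : l < r) : 1 ≤ i l := by
  rcases Nat.eq_zero_or_pos l with rfl | hpos
  · exact h.one_le_first
  · exact Nat.one_le_of_lt (h.lt_of_lt hpos hl)

theorem le (h : TightlyInterlaced n r i j) (hl : l < r) : j l ≤ n := by
  rcases Nat.lt_or_eq_of_le (Nat.le_sub_one_of_lt hl) with hlt | rfl
  · have := h.lt_of_lt hlt (by lia)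
    have := h.lt (r - 1) (by lia)
    have := h.last_le
    lia
  · exact h.last_le

theorem isBetweenBlocks_zero (h : TightlyInterlaced n r i j) : IsBetweenBlocks r i j 0 0 :=
  ⟨Nat.zero_le r, by simp, fun _ _ hq ↦ h.one_le hq⟩

theorem isBetweenBlocks_last (h : TightlyInterlaced n r i j) : IsBetweenBlocks r i j r n :=
  ⟨le_rfl, fun _ ↦ h.le, fun _ hr hq ↦ absurd hr hq.not_ge⟩

theorem exists_isBetweenBlocks (h : TightlyInterlaced n r i j) (hl : l ≤ r) :
    ∃ m ≤ n, IsBetweenBlocks r i j l m := by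
  rcases l with _ | l
  · exact ⟨0, Nat.zero_le n, h.isBetweenBlocks_zero⟩
  · refine ⟨j l, h.le hl, hl, fun q hq ↦ ?_, fun q hlq hq ↦ h.lt_of_lt hlq hq⟩
    rcases Nat.lt_succ_iff_lt_or_eq.mp hq with hlt | rfl
    · exact ((h.lt_of_lt hlt hl).trans (h.lt l hl)).le
    · exact le_rfl

theorem isBetweenBlocks_succ (h : TightlyInterlaced n r i j) (hm : IsBetweenBlocks r i j l m) :
    (IsInBlock r i j l (m + 1) ∧ m + 1 = i l) ∨
      (IsBetweenBlocks r i j l (m + 1) ∧ ∀ q < r, m + 1 ≠ i q ∧ m + 1 ≠ j q) := by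
  obtain ⟨hl, hbefore, hafter⟩ := hm
  by_cases hstart : l < r ∧ m + 1 = i l
  · exact Or.inl ⟨⟨hstart.1, hstart.2.ge, hstart.2 ▸ h.lt l hstart.1⟩, hstart.2⟩
  have hafter' : ∀ q, l ≤ q → q < r → m + 1 < i q := fun q hlq hq ↦ by
    have := hafter q hlq hq
    rcases hlq.eq_or_lt with rfl | hlt
    · lia
    · have := h.lt_of_lt hlt hq
      have := h.lt l (by lia)
      have := hafter l le_rfl (by lia)
      lia
  refine Or.inr ⟨⟨hl, fun q hq ↦ (hbefore q hq).trans m.le_succ, hafter'⟩, fun q hq ↦ ?_⟩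
  have := h.lt q hq
  rcases lt_or_ge q l with hlt | hge
  · have := hbefore q hlt
    lia
  · have := hafter' q hge hq
    lia

theorem isInBlock_succ (h : TightlyInterlaced n r i j) (hm : IsInBlock r i j l m) :
    (IsBetweenBlocks r i j (l + 1) (m + 1) ∧ m + 1 = j l) ∨
      (IsInBlock r i j l (m + 1) ∧ ∀ q < r, m + 1 ≠ i q ∧ m + 1 ≠ j q) := by
  obtain ⟨hl, hle, hlt⟩ := hm
  have hbefore : ∀ q < l, j q < i l := fun q hq ↦ h.lt_of_lt hq hl
  have hafter : ∀ q, l < q → q < r → j l < i q := fun q ↦ h.lt_of_lt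
  by_cases hend : m + 1 = j l
  · refine Or.inl ⟨⟨hl, fun q hq ↦ ?_, fun q hlq hq ↦ hend ▸ hafter q hlq hq⟩, hend⟩
    rcases Nat.lt_succ_iff_lt_or_eq.mp hq with hql | rfl
    · have := hbefore q hql
      lia
    · exact hend.ge
  · refine Or.inr ⟨⟨hl, by lia, by lia⟩, fun q hq ↦ ?_⟩
    have := h.lt q hq
    rcases lt_trichotomy q l with hql | rfl | hlq
    · have := hbefore q hql
      lia
    · lia
    · have := hafter q hlq hq
      lia

end TightlyInterlaced

theorem IsBetweenBlocks.eq {l' : ℕ} (hij : ∀ q < r, i q < j q) (h : IsBetweenBlocks r i j l m)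
    (h' : IsBetweenBlocks r i j l' m) : l = l' := by
  obtain ⟨hl, hbefore, hafter⟩ := h
  obtain ⟨hl', hbefore', hafter'⟩ := h'
  rcases lt_trichotomy l l' with hlt | heq | hgt
  · have := hij l (by lia)
    have := hbefore' l hlt
    have := hafter l le_rfl (by lia)
    lia
  · exact heq
  · have := hij l' (by lia)
    have := hbefore l' hgt
    have := hafter' l' le_rfl (by lia)
    lia

theorem IsBetweenBlocks.not_isInBlock {l' : ℕ} (h : IsBetweenBlocks r i j l m) :
    ¬IsInBlock r i j l' m := by
  rintro ⟨hl', hle, hlt⟩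
  rcases lt_or_ge l' l with hlt' | hge
  · exact (h.2.1 l' hlt').not_gt hlt
  · exact (h.2.2 l' hge hl').not_ge hle

end TightInterlacing

section RankTwoModule

/-- The arrows of the rank-two module `𝕄(I, J)` over a ring with chosen element `ϖ`. Arrows away
from the positions `i l`, `j l` may be arbitrary nonzero scalars: only the lines spanned by the
transport matrices matter. -/
structure IsRankTwoModule {A : Type*} [CommRing A] {n : ℕ} (ϖ : A) (r : ℕ) (i j : ℕ → ℕ)
    (b : ℕ → A) (x : ZMod n → Matrix (Fin 2) (Fin 2) A) : Prop where
  apply_i : ∀ l < r, x (i l) = !![ϖ, b (2 * l + 1); 0, 1]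
  apply_j : ∀ l < r, x (j l) = !![1, b (2 * l + 2); 0, ϖ]
  apply_scalar : ∀ m ∈ Finset.Icc 1 n, (∀ l < r, m ≠ i l ∧ m ≠ j l) →
    ∃ c : A, c ≠ 0 ∧ x m = c • 1

/-- The sum `s_1 + ⋯ + s_l` of the block sums `s_q = b_{2q-1} + b_{2q}`. -/
def blockSum {A : Type*} [AddCommMonoid A] (b : ℕ → A) (l : ℕ) : A :=
  ∑ q ∈ Finset.Icc 1 l, (b (2 * q - 1) + b (2 * q))

theorem blockSum_succ {A : Type*} [AddCommMonoid A] (b : ℕ → A) (l : ℕ) :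
    blockSum b (l + 1) = blockSum b l + (b (2 * l + 1) + b (2 * l + 2)) :=
  Finset.sum_Icc_succ_top (by lia) _

theorem blockSum_eq_sum_Icc {A : Type*} [AddCommMonoid A] (b : ℕ → A) (r : ℕ) :
    blockSum b r = ∑ m ∈ Finset.Icc 1 (2 * r), b m := by
  induction r with
  | zero => simp [blockSum]
  | succ r ih =>
    rw [blockSum_succ, ih, Nat.mul_succ, Finset.sum_Icc_succ_top (by lia),
      Finset.sum_Icc_succ_top (by lia), add_assoc]

variable {A : Type*} [CommRing A] {ϖ : A}

theorem arrow_i_mul (s c : A) :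
    !![ϖ, c; 0, 1] * !![ϖ, s; 0, ϖ] = ϖ • !![ϖ, s + c; 0, 1] := by
  rw [mul_fin_two, smul_of, smul_cons]
  simp [mul_add, mul_comm]

theorem arrow_j_mul (s c : A) :
    !![1, c; 0, ϖ] * !![ϖ, s; 0, 1] = !![ϖ, s + c; 0, ϖ] := by
  simp

theorem exists_semiconjBy_inBlock_iff (c : A) (M : Matrix (Fin 2) (Fin 2) A) :
    (∃ B, SemiconjBy !![ϖ, c; 0, 1] M B) ↔ ϖ ∣ M 1 0 := by
  constructor
  · rintro ⟨B, hB⟩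
    have h10 : M 1 0 = B 1 0 * ϖ := by
      simpa [mul_apply, Fin.sum_univ_two] using congr_fun₂ hB.eq 1 0
    exact ⟨B 1 0, by rw [h10, mul_comm]⟩
  · rintro ⟨u, hu⟩
    refine ⟨!![M 0 0 + c * u, ϖ * M 0 1 + c * M 1 1 - (M 0 0 + c * u) * c; u, M 1 1 - u * c], ?_⟩
    ext p q
    fin_cases p <;> fin_cases q <;>
      simp only [mul_apply, Fin.sum_univ_two, of_apply, cons_val', cons_val_fin_one,
        Fin.zero_eta, Fin.mk_one, cons_val_zero, cons_val_one, hu] <;>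
      ring

variable [IsDomain A]

theorem exists_semiconjBy_betweenBlocks_iff (hϖ : ϖ ≠ 0) (s : A) {u : A}
    {M : Matrix (Fin 2) (Fin 2) A} (hu : M 1 0 = ϖ * u) :
    (∃ B, SemiconjBy !![ϖ, s; 0, ϖ] M B) ↔ ϖ ∣ s * (M 1 1 - M 0 0 - s * u) := by
  constructor
  · rintro ⟨B, hB⟩
    have h00 : ϖ * M 0 0 + s * M 1 0 = B 0 0 * ϖ := by
      simpa [mul_apply, Fin.sum_univ_two] using congr_fun₂ hB.eq 0 0
    have h01 : ϖ * M 0 1 + s * M 1 1 = B 0 0 * s + B 0 1 * ϖ := by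
      simpa [mul_apply, Fin.sum_univ_two] using congr_fun₂ hB.eq 0 1
    have hB00 : B 0 0 = M 0 0 + s * u :=
      mul_left_cancel₀ hϖ (by linear_combination s * hu - h00)
    exact ⟨B 0 1 - M 0 1, by linear_combination h01 + s * hB00⟩
  · rintro ⟨c, hc⟩
    refine ⟨!![M 0 0 + s * u, M 0 1 + c; ϖ * u, M 1 1 - s * u], ?_⟩
    ext p q
    fin_cases p <;> fin_cases q <;>
      simp only [mul_apply, Fin.sum_univ_two, of_apply, cons_val', cons_val_fin_one,
        Fin.zero_eta, Fin.mk_one, cons_val_zero, cons_val_one, hu]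
    · ring
    · linear_combination hc
    · ring
    · ring

theorem semiconjBy_iff_of_smul_eq {ι : Type*} [Fintype ι] {X Y M B : Matrix ι ι A} {a c : A}
    (ha : a ≠ 0) (hc : c ≠ 0) (h : a • X = c • Y) : SemiconjBy X M B ↔ SemiconjBy Y M B := by
  rw [SemiconjBy, ← smul_right_inj ha, ← Matrix.smul_mul, ← Matrix.mul_smul, h,
    Matrix.smul_mul, Matrix.mul_smul, smul_right_inj hc, SemiconjBy]

variable {n r l m : ℕ} {i j : ℕ → ℕ} {b : ℕ → A} {x : ZMod n → Matrix (Fin 2) (Fin 2) A}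

theorem exists_smul_transport_eq (hϖ : ϖ ≠ 0) (h : TightlyInterlaced n r i j)
    (hx : IsRankTwoModule ϖ r i j b x) (hm : m ≤ n) :
    ∃ l, ∃ c : A, c ≠ 0 ∧
      ((IsBetweenBlocks r i j l m ∧ ϖ • transport x m = c • !![ϖ, blockSum b l; 0, ϖ]) ∨
        (IsInBlock r i j l m ∧
          ϖ • transport x m = c • !![ϖ, blockSum b l + b (2 * l + 1); 0, 1])) := by
  induction m with
  | zero =>
    refine ⟨0, 1, one_ne_zero, Or.inl ⟨h.isBetweenBlocks_zero, ?_⟩⟩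
    ext p q
    fin_cases p <;> fin_cases q <;> simp [transport, blockSum]
  | succ m ih =>
    have hscalar : (∀ q < r, m + 1 ≠ i q ∧ m + 1 ≠ j q) →
        ∃ c : A, c ≠ 0 ∧ transport x (m + 1) = c • transport x m := fun hne ↦ by
      obtain ⟨c, hc, hxm⟩ := hx.apply_scalar (m + 1) (Finset.mem_Icc.mpr ⟨by lia, hm⟩) hne
      exact ⟨c, hc, by rw [transport, hxm, Matrix.smul_mul, one_mul]⟩
    have hmul : ∀ {c : A} {Y : Matrix (Fin 2) (Fin 2) A}, ϖ • transport x m = c • Y →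
        ϖ • transport x (m + 1) = c • (x (m + 1 : ℕ) * Y) := fun hY ↦ by
      rw [transport, ← Matrix.mul_smul, hY, Matrix.mul_smul]
    obtain ⟨l, c, hc, ⟨hpos, hY⟩ | ⟨hpos, hY⟩⟩ := ih (by lia)
    · rcases h.isBetweenBlocks_succ hpos with ⟨hpos', hi⟩ | ⟨hpos', hne⟩
      · refine ⟨l, c * ϖ, mul_ne_zero hc hϖ, Or.inr ⟨hpos', ?_⟩⟩
        rw [hmul hY, hi, hx.apply_i l hpos'.1, arrow_i_mul, smul_smul]
      · obtain ⟨d, hd, hdX⟩ := hscalar hne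
        exact ⟨l, d * c, mul_ne_zero hd hc, Or.inl ⟨hpos', by
          rw [hdX, smul_comm, hY, smul_smul]⟩⟩
    · rcases h.isInBlock_succ hpos with ⟨hpos', hj⟩ | ⟨hpos', hne⟩
      · refine ⟨l + 1, c, hc, Or.inl ⟨hpos', ?_⟩⟩
        rw [hmul hY, hj, hx.apply_j l hpos.1, arrow_j_mul, blockSum_succ, add_assoc]
      · obtain ⟨d, hd, hdX⟩ := hscalar hne
        exact ⟨l, d * c, mul_ne_zero hd hc, Or.inr ⟨hpos', by
          rw [hdX, smul_comm, hY, smul_smul]⟩⟩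

theorem isRightRegular_transport (hϖ : ϖ ≠ 0) (h : TightlyInterlaced n r i j)
    (hx : IsRankTwoModule ϖ r i j b x) (hm : m ≤ n) : IsRightRegular (transport x m) := by
  obtain ⟨l, c, hc, hX⟩ := exists_smul_transport_eq hϖ h hx hm
  have hdet : (ϖ • transport x m).det ≠ 0 := by
    rcases hX with ⟨-, hX⟩ | ⟨-, hX⟩ <;> simp [hX, det_fin_two, hc, hϖ]
  rw [det_smul] at hdet
  exact (isRegular_of_isLeftRegular_det
    (IsLeftCancelMulZero.mul_left_cancel_of_ne_zero (right_ne_zero_of_mul hdet))).right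

theorem commute_transport_last (hϖ : ϖ ≠ 0) (h : TightlyInterlaced n r i j)
    (hx : IsRankTwoModule ϖ r i j b x) (hb : blockSum b r = 0) (M : Matrix (Fin 2) (Fin 2) A) :
    Commute (transport x n) M := by
  obtain ⟨l, c, hc, ⟨hpos, hX⟩ | ⟨hpos, -⟩⟩ := exists_smul_transport_eq hϖ h hx le_rfl
  · obtain rfl := hpos.eq h.lt h.isBetweenBlocks_last
    have hscalar : !![ϖ, 0; 0, ϖ] = ϖ • (1 : Matrix (Fin 2) (Fin 2) A) := by
      simp [one_fin_two]
    rw [hb, hscalar] at hX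
    exact (semiconjBy_iff_of_smul_eq hϖ hc hX).mpr ((Commute.one_left M).smul_left ϖ)
  · exact absurd hpos h.isBetweenBlocks_last.not_isInBlock

theorem forall_exists_semiconjBy_transport_iff (hϖ : ϖ ≠ 0) (h : TightlyInterlaced n r i j)
    (hx : IsRankTwoModule ϖ r i j b x) (M : Matrix (Fin 2) (Fin 2) A) :
    (∀ m ≤ n, ∃ B, SemiconjBy (transport x m) M B) ↔
      ∃ u, M 1 0 = ϖ * u ∧
        ∀ l ≤ r, ϖ ∣ blockSum b l * (M 1 1 - M 0 0 - blockSum b l * u) := by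
  constructor
  · intro hM
    have hdvd : ϖ ∣ M 1 0 := by
      have hpos : IsInBlock r i j 0 (i 0) := ⟨h.pos, le_rfl, h.lt 0 h.pos⟩
      have hm : i 0 ≤ n := (h.lt 0 h.pos).le.trans (h.le h.pos)
      obtain ⟨l, c, hc, ⟨hpos', -⟩ | ⟨-, hX⟩⟩ := exists_smul_transport_eq hϖ h hx hm
      · exact absurd hpos hpos'.not_isInBlock
      · simpa only [semiconjBy_iff_of_smul_eq hϖ hc hX, exists_semiconjBy_inBlock_iff]
          using hM (i 0) hm
    obtain ⟨u, hu⟩ := hdvd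
    refine ⟨u, hu, fun l hl ↦ ?_⟩
    obtain ⟨m, hm, hpos⟩ := h.exists_isBetweenBlocks hl
    obtain ⟨l', c, hc, ⟨hpos', hX⟩ | ⟨hpos', -⟩⟩ := exists_smul_transport_eq hϖ h hx hm
    · obtain rfl := hpos.eq h.lt hpos'
      simpa only [semiconjBy_iff_of_smul_eq hϖ hc hX, exists_semiconjBy_betweenBlocks_iff hϖ _ hu]
        using hM m hm
    · exact absurd hpos' hpos.not_isInBlock
  · rintro ⟨u, hu, hdvd⟩ m hm
    obtain ⟨l, c, hc, ⟨hpos, hX⟩ | ⟨-, hX⟩⟩ := exists_smul_transport_eq hϖ h hx hm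
    · simpa only [semiconjBy_iff_of_smul_eq hϖ hc hX, exists_semiconjBy_betweenBlocks_iff hϖ _ hu]
        using hdvd l hpos.1
    · simpa only [semiconjBy_iff_of_smul_eq hϖ hc hX, exists_semiconjBy_inBlock_iff]
        using ⟨u, hu⟩

theorem cyclicIndecomposable_iff_forall_not_dvd (hϖ : ϖ ≠ 0) (h : TightlyInterlaced n r i j)
    (hx : IsRankTwoModule ϖ r i j b x) (hb : blockSum b r = 0) :
    CyclicIndecomposable x ↔ ¬∃ u, ∀ s ∈ blockSum b '' Set.Iic r, ϖ ∣ s * (1 - s * u) := by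
  have : NeZero n := ⟨by have := h.one_le h.pos; have := h.lt 0 h.pos; have := h.le h.pos; lia⟩
  rw [cyclicIndecomposable_iff (fun m ↦ isRightRegular_transport hϖ h hx)
    (commute_transport_last hϖ h hx hb), ← exists_isIdempotentElem_iff_exists_dvd]
  simp only [forall_exists_semiconjBy_transport_iff hϖ h hx, Set.forall_mem_image, Set.mem_Iic]
  grind

end RankTwoModule

theorem stmt4_general {A : Type*} [CommRing A] [IsDomain A] {ϖ : A} (hϖ : ϖ ≠ 0)
    (hmax : (Ideal.span {ϖ}).IsMaximal) {n r : ℕ} {i j : ℕ → ℕ} (h : TightlyInterlaced n r i j)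
    {b : ℕ → A} (hb : ∑ m ∈ Finset.Icc 1 (2 * r), b m = 0)
    {x : ZMod n → Matrix (Fin 2) (Fin 2) A} (hx : IsRankTwoModule ϖ r i j b x) :
    CyclicIndecomposable x ↔
      ∃ l₁ l₂ : ℕ, 1 ≤ l₁ ∧ l₁ < l₂ ∧ l₂ ≤ r ∧
        ¬ϖ ∣ b (2 * l₁ - 1) + b (2 * l₁) ∧
        ¬ϖ ∣ b (2 * l₂ - 1) + b (2 * l₂) ∧
        (∀ l, l₁ < l → l < l₂ → ϖ ∣ b (2 * l - 1) + b (2 * l)) ∧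
        ¬ϖ ∣ b (2 * l₁ - 1) + b (2 * l₁) + (b (2 * l₂ - 1) + b (2 * l₂)) := by
  let _ := Ideal.Quotient.field (Ideal.span {ϖ})
  let π := Ideal.Quotient.mk (Ideal.span {ϖ})
  have hker : ∀ f, π f = 0 ↔ ϖ ∣ f := fun f ↦
    Ideal.Quotient.eq_zero_iff_mem.trans Ideal.mem_span_singleton
  rw [cyclicIndecomposable_iff_forall_not_dvd hϖ h hx (blockSum_eq_sum_Icc b r ▸ hb),
    exists_dvd_mul_one_sub_mul_iff Ideal.Quotient.mk_surjective hker]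
  simp only [Set.forall_mem_image, Set.mem_Iic, blockSum, map_sum]
  rw [exists_forall_sum_Icc_eq_zero_or_eq_iff, not_not]
  simp only [ne_eq, ← map_add, hker]

/-- (Theorem 3.3, indecomposability criterion.)  With `s_l := b_{2l−1} + b_{2l}`
(`1`-indexed, `l = 1,…,r`), the module `𝕄(I,J)` is indecomposable — i.e. every
idempotent endomorphism family `(φ_1,…,φ_n)` is `0` everywhere or the identity
everywhere — if and only if there exist `1 ≤ l₁ < l₂ ≤ r` with `t ∤ s_{l₁}`,
`t ∤ s_{l₂}`, `t ∣ s_l` for every `l₁ < l < l₂`, and `t ∤ s_{l₁} + s_{l₂}`.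
Here `i, j : ℕ → ℕ` are `0`-indexed, so `i l, j l` for `l < r` are the paper's
`i_{l+1}, j_{l+1}`, and `b (2*l+1), b (2*l+2)` are the paper's `b_{2(l+1)-1}, b_{2(l+1)}`. -/
theorem stmt4
    (n k r : ℕ) (hn : 6 ≤ n) (hr2 : 2 ≤ r) (hrk : r ≤ k) (hkrn : k + r ≤ n)
    (i j : ℕ → ℕ)
    (hi1 : 1 ≤ i 0) (hjr : j (r - 1) ≤ n)
    (hij : ∀ l, l < r → i l < j l)
    (hji : ∀ l, l + 1 < r → j l < i (l + 1))
    (P : Finset ℕ) (hP : P ⊆ Finset.Icc 1 n)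
    (hPcard : P.card = k - r)
    (hPdisj : ∀ l, l < r → i l ∉ P ∧ j l ∉ P)
    (b : ℕ → R) (hb : ∑ m ∈ Finset.Icc 1 (2 * r), b m = 0)
    (x : ZMod n → M2)
    (hxI : ∀ l, l < r → x ((i l : ZMod n)) = !![t, b (2 * l + 1); 0, 1])
    (hxJ : ∀ l, l < r → x ((j l : ZMod n)) = !![1, b (2 * l + 2); 0, t])
    (hxP : ∀ m ∈ P, x ((m : ZMod n)) = 1)
    (hxO : ∀ m ∈ Finset.Icc 1 n, m ∉ P → (∀ l, l < r → m ≠ i l ∧ m ≠ j l) →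
      x ((m : ZMod n)) = t • (1 : M2)) :
    (∀ φ : ZMod n → M2,
        (∀ m : ZMod n, x m * φ (m - 1) = φ m * x m) →
        (∀ m : ZMod n, φ m * φ m = φ m) →
        (∀ m : ZMod n, φ m = 0) ∨ (∀ m : ZMod n, φ m = 1)) ↔
    (∃ l₁ l₂ : ℕ, 1 ≤ l₁ ∧ l₁ < l₂ ∧ l₂ ≤ r ∧
      ¬ t ∣ (b (2 * l₁ - 1) + b (2 * l₁)) ∧
      ¬ t ∣ (b (2 * l₂ - 1) + b (2 * l₂)) ∧
      (∀ l, l₁ < l → l < l₂ → t ∣ (b (2 * l - 1) + b (2 * l))) ∧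
      ¬ t ∣ (b (2 * l₁ - 1) + b (2 * l₁) + (b (2 * l₂ - 1) + b (2 * l₂)))) := by
  have hmax : (Ideal.span {t}).IsMaximal :=
    PowerSeries.maximalIdeal_eq_span_X (k := ℂ) ▸ IsLocalRing.maximalIdeal.isMaximal R
  refine stmt4_general PowerSeries.X_ne_zero hmax ⟨by lia, hi1, hij, hji, hjr⟩ hb
    ⟨hxI, hxJ, fun m hm hne ↦ ?_⟩
  by_cases hmP : m ∈ P
  · exact ⟨1, one_ne_zero, by rw [hxP m hmP, one_smul]⟩
  · exact ⟨t, PowerSeries.X_ne_zero, hxO m hm hmP hne⟩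

end
end

section
/- (Splitting-off criterion for the submodule L_J, from Section 3) The following are equivalent: (1) t divides b_i + b_{i+1} for every odd i ∈ {1, 3, …, 2r−1}; (2) there exist α_1, …, α_{2r} ∈ R (indices read modulo 2r) satisfying α_i = b_{i+1} + t·α_{i+1} for every odd i and t·α_i = b_{i+1} + α_{i+1} for every even i. (Condition (2) says that the row vectors μ_i = [1, α_i] define a retraction of the inclusion of L_J into 𝕄(I,J), i.e. L_J is a direct summand of 𝕄(I,J).) -/
open PowerSeries

noncomputable section

/-!
Rescaling the even coordinates, i.e. setting `β i = α i` for odd `i` and `β i = t * α i` for even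
`i`, turns the equations for `α` into `β i = b (i + 1) + β (i + 1)` for all `i`. This system is
solvable because the `b i` add up to zero, and its solutions differ by a constant, so that one may
take `β 0 = 0`. A solution comes from some `α` exactly when `t` divides `β i` for every even `i`,
and consecutive even values differ by `β (i - 1) - β (i + 1) = b i + b (i + 1)`, `i` odd.
-/

section Parity

variable {n : ℕ} [NeZero n]

lemma even_zmod_val_iff (hn : Even n) {a : ZMod n} : Even a.val ↔ Even a := by
  refine ⟨fun h ↦ by simpa using h.map (Nat.castRingHom (ZMod n)), ?_⟩
  rintro ⟨c, rfl⟩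
  rw [ZMod.val_add, hn.mod_even_iff]
  exact ⟨c.val, rfl⟩

lemma odd_zmod_val_iff (hn : Even n) {a : ZMod n} : Odd a.val ↔ Odd a := by
  refine ⟨fun h ↦ by simpa only [ZMod.natCast_zmod_val] using h.natCast (R := ZMod n), ?_⟩
  rintro ⟨c, rfl⟩
  obtain ⟨k, rfl⟩ := ZMod.natCast_zmod_surjective c
  have cast_eq : (2 * k + 1 : ZMod n) = (2 * k + 1 : ℕ) := by push_cast; rfl
  rw [cast_eq, ZMod.val_natCast, Odd.mod_even_iff hn]
  exact odd_two_mul_add_one k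

lemma not_even_zmod_iff_odd (hn : Even n) {a : ZMod n} : ¬Even a ↔ Odd a := by
  rw [← even_zmod_val_iff hn, ← odd_zmod_val_iff hn, Nat.not_even_iff_odd]

end Parity

lemma periodic_sum_range {M : Type*} [AddCommMonoid M] {n : ℕ} {b : ℕ → M}
    (hper : Function.Periodic b n) (hsum : ∑ m ∈ Finset.range n, b m = 0) :
    Function.Periodic (fun k ↦ ∑ m ∈ Finset.range k, b m) n := by
  intro k
  simp only [add_comm k n, Finset.sum_range_add, hsum, zero_add]
  exact Finset.sum_congr rfl fun m _ ↦ by rw [add_comm, hper]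

lemma dvd_iff_mem_range_mulLeft {A : Type*} [NonUnitalRing A] {a x : A} :
    a ∣ x ↔ x ∈ (AddMonoidHom.mulLeft a).range :=
  exists_congr fun _ ↦ eq_comm

section Potential

variable {G : Type*} [AddCommGroup G] {n : ℕ}

/-- `β` is a potential for the weights `b` on the cyclic quiver with vertex set `ZMod n`: it drops
by the weight of each arrow. As for the matrices `x_i`, the arrow `i ⟶ i + 1` carries the index of
its target. -/
def IsPotential (b β : ZMod n → G) : Prop :=
  ∀ i, β i = b (i + 1) + β (i + 1)

lemma exists_isPotential [NeZero n] {b : ZMod n → G}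
    (hb : ∑ m ∈ Finset.range n, b (m : ZMod n) = 0) :
    ∃ β, IsPotential b β ∧ β 0 = 0 := by
  let S : ℕ → G := fun k ↦ ∑ m ∈ Finset.range k, b (m : ZMod n)
  have periodic_S : Function.Periodic S n := periodic_sum_range (fun m ↦ by simp) hb
  let β : ZMod n → G := fun i ↦ b 0 - S (i.val + 1)
  have β_natCast (k : ℕ) : β k = b 0 - S (k + 1) := by
    have h := (periodic_S.add_const 1).map_mod_nat k
    simp only [β, ZMod.val_natCast, h]
  refine ⟨β, fun i ↦ ?_, by simp [β, S]⟩
  obtain ⟨k, rfl⟩ := ZMod.natCast_zmod_surjective i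
  have S_succ : S (k + 1 + 1) = S (k + 1) + b (k + 1 : ℕ) := Finset.sum_range_succ _ _
  rw [← Nat.cast_succ, β_natCast, β_natCast, S_succ]
  abel

namespace IsPotential

variable {b β : ZMod n → G}

lemma sub_add_one_add_one (hβ : IsPotential b β) (i : ZMod n) :
    β i - β (i + 1 + 1) = b (i + 1) + b (i + 1 + 1) := by
  rw [hβ i, hβ (i + 1)]
  abel

lemma mem_of_even [NeZero n] (hβ : IsPotential b β) {H : AddSubgroup G} (h0 : β 0 ∈ H)
    (hb : ∀ i, Odd i → b i + b (i + 1) ∈ H) {i : ZMod n} (hi : Even i) : β i ∈ H := by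
  have step {j : ZMod n} (hj : Even j) (hmem : β j ∈ H) : β (j + 1 + 1) ∈ H := by
    have diff_mem := hb (j + 1) hj.add_one
    rw [← hβ.sub_add_one_add_one] at diff_mem
    simpa only [sub_sub_cancel] using sub_mem hmem diff_mem
  have mem_two_mul (k : ℕ) : β (2 * k) ∈ H := by
    induction k with
    | zero => simpa only [Nat.cast_zero, mul_zero] using h0
    | succ k ih =>
      have two_mul_succ : (2 * (k + 1 : ℕ) : ZMod n) = 2 * k + 1 + 1 := by push_cast; ring
      exact two_mul_succ ▸ step (even_two_mul _) ih
  obtain ⟨c, rfl⟩ := hi.exists_two_nsmul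
  obtain ⟨k, rfl⟩ := ZMod.natCast_zmod_surjective c
  simpa only [nsmul_eq_mul, Nat.cast_ofNat] using mem_two_mul k

end IsPotential

lemma exists_lift_of_mem_range [NeZero n] (hn : Even n) {f : G →+ G} {β : ZMod n → G}
    (hβ : ∀ i, Even i → β i ∈ f.range) :
    ∃ α : ZMod n → G, ∀ i, (Odd i → α i = β i) ∧ (Even i → f (α i) = β i) := by
  have lift_at (i : ZMod n) : ∃ a, (Odd i → a = β i) ∧ (Even i → f a = β i) := by
    by_cases hi : Even i
    · obtain ⟨a, ha⟩ := hβ i hi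
      exact ⟨a, fun hodd ↦ absurd hi ((not_even_zmod_iff_odd hn).mpr hodd), fun _ ↦ ha⟩
    · exact ⟨β i, fun _ ↦ rfl, fun heven ↦ absurd heven hi⟩
  choose α hα using lift_at
  exact ⟨α, hα⟩

theorem stmt9_general [NeZero n] (hn : Even n) (f : G →+ G) {b : ZMod n → G}
    (hb : ∑ m ∈ Finset.range n, b (m : ZMod n) = 0) :
    (∀ i, Odd i → b i + b (i + 1) ∈ f.range) ↔
      ∃ α : ZMod n → G, ∀ i, (Odd i → α i = b (i + 1) + f (α (i + 1))) ∧
        (Even i → f (α i) = b (i + 1) + α (i + 1)) := by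
  constructor
  · intro hodd
    obtain ⟨β, hβ, hβ0⟩ := exists_isPotential hb
    have even_mem (i : ZMod n) (hi : Even i) : β i ∈ f.range :=
      hβ.mem_of_even (hβ0 ▸ zero_mem _) hodd hi
    obtain ⟨α, hα⟩ := exists_lift_of_mem_range hn even_mem
    refine ⟨α, fun i ↦ ⟨fun hi ↦ ?_, fun hi ↦ ?_⟩⟩
    · rw [(hα i).1 hi, (hα (i + 1)).2 hi.add_one, hβ i]
    · rw [(hα i).2 hi, (hα (i + 1)).1 hi.add_one, hβ i]
  · rintro ⟨α, hα⟩ i hi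
    have eq_odd := (hα i).1 hi
    have eq_even := (hα (i - 1)).2 (hi.sub_odd odd_one)
    rw [sub_add_cancel] at eq_even
    refine ⟨α (i - 1) - α (i + 1), ?_⟩
    rw [map_sub, eq_even, eq_odd]
    abel

end Potential

/-- (Splitting-off criterion for the submodule `L_J`, from Section 3.)
In the case `(k, n) = (r, 2r)` with `I = {1,3,…,2r−1}`, `J = {2,4,…,2r}`, and
`b : ZMod 2r → ℂ[[t]]` with `b_1 + ⋯ + b_{2r} = 0` (indices modulo `2r`), the
following are equivalent:
(1) `t ∣ b_i + b_{i+1}` for every odd `i`;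
(2) there exist `α_i ∈ ℂ[[t]]` (`i ∈ ℤ/2r`) with `α_i = b_{i+1} + t·α_{i+1}` for
every odd `i` and `t·α_i = b_{i+1} + α_{i+1}` for every even `i`
(i.e. the rows `μ_i = [1, α_i]` define a retraction of `L_J ↪ 𝕄(I,J)`, so `L_J`
is a direct summand of `𝕄(I,J)`). -/
theorem stmt9 (r : ℕ) (hr : 2 ≤ r) (b : ZMod (2 * r) → R)
    (hb : ∑ m ∈ Finset.range (2 * r), b ((m : ZMod (2 * r))) = 0) :
    (∀ i : ZMod (2 * r), Odd i.val → t ∣ (b i + b (i + 1))) ↔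
    (∃ α : ZMod (2 * r) → R, ∀ i : ZMod (2 * r),
      (Odd i.val → α i = b (i + 1) + t * α (i + 1)) ∧
      (Even i.val → t * α i = b (i + 1) + α (i + 1))) := by
  have : NeZero (2 * r) := ⟨by lia⟩
  simpa only [odd_zmod_val_iff (even_two_mul r), even_zmod_val_iff (even_two_mul r),
    dvd_iff_mem_range_mulLeft, AddMonoidHom.coe_mulLeft] using
    stmt9_general (even_two_mul r) (AddMonoidHom.mulLeft t) hb

end
end

section
/- (Theorem 3.7, explicit decomposition of 𝕄(I,J)) Let X' be a subset of the set of even residues of ℤ/2r (the peaks of I) with 1 ≤ |X'| ≤ r − 1. Assume (all indices modulo 2r): (i) for every even residue j, t divides b_{j+1} + b_{j+2} if and only if (j ∈ X' ⇔ j+2 ∈ X'); and (ii) whenever j and j' are even residues with t ∤ b_{j+1}+b_{j+2} and t ∤ b_{j'+1}+b_{j'+2} such that t divides b_{l+1}+b_{l+2} for every even residue l lying cyclically strictly between j and j', then t divides (b_{j+1}+b_{j+2}) + (b_{j'+1}+b_{j'+2}). Define subsets X, Y of ℤ/2r by: for every even residue j, j+1 ∈ X ⇔ j ∈ X' and j+2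 ∈ X ⇔ j+2 ∉ X', while j+1 ∈ Y ⇔ j ∉ X' and j+2 ∈ Y ⇔ j+2 ∈ X'. Then 𝕄(I,J) is isomorphic to the direct sum L_X ⊕ L_Y; concretely, there exist vectors w_i, v_i ∈ R² for i ∈ ℤ/2r such that for every i the 2×2 matrix with columns w_i and v_i is invertible over R, and for every i: x_{i+1}·w_i = w_{i+1} if i+1 ∈ X and x_{i+1}·w_i = t·w_{i+1} if i+1 ∉ X, while x_{i+1}·v_i = v_{i+1} if i+1 ∈ Y and x_{i+1}·v_i = t·v_{i+1} if i+1 ∉ Y. -/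
open PowerSeries Matrix

noncomputable section

/-!
Since `b` sums to zero it has a cyclic primitive `s`, with `s (i + 1) = s i + b (i + 1)`. For every
constant `κ` the vectors `(s i - κ, 1)` at odd `i` and `(s i - κ, ϖ)` at even `i` are carried to one
another by the arrows up to factors `1` and `ϖ`, so they span a rank-1 submodule. At an even vertex
its generator is divisible by `ϖ` exactly when `s i ≡ κ` modulo `ϖ`, and dividing there saturates
the submodule at that vertex.

By (i), modulo `ϖ` the primitive jumps between `j` and `j + 2` exactly when one of them enters or
leaves `X'`; by (ii), successive jumps cancel. Hence `s` takes just two values modulo `ϖ` on the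
even residues, one on `X'` and the other off `X'`. Taking `κ` and `μ` to be lifts of these values,
the saturated generators have determinant `μ - κ` at every vertex, which is a unit.
-/

section Sequences

theorem eq_of_forall_succ_eq {α : Type*} {f : ℕ → α} {m n : ℕ} (hmn : m ≤ n)
    (h : ∀ k, m ≤ k → k < n → f (k + 1) = f k) : f n = f m := by
  induction n, hmn using Nat.le_induction with
  | base => rfl
  | succ n hmn ih =>
    rw [h n hmn n.lt_succ_self, ih fun k hmk hkn => h k hmk (hkn.trans n.lt_succ_self)]

theorem exists_first_change {α : Type*} {f : ℕ → α} {m n : ℕ} (hmn : m ≤ n) (h : f n ≠ f m) :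
    ∃ l, m ≤ l ∧ l < n ∧ f (l + 1) ≠ f l ∧ ∀ k, m ≤ k → k < l → f (k + 1) = f k := by
  classical
  have hex : ∃ l, m ≤ l ∧ l < n ∧ f (l + 1) ≠ f l := by
    by_contra! hcon
    exact h (eq_of_forall_succ_eq hmn hcon)
  obtain ⟨hml, hln, hl⟩ := Nat.find_spec hex
  refine ⟨Nat.find hex, hml, hln, hl, fun k hmk hkl => ?_⟩
  by_contra hk
  exact Nat.find_min hex hkl ⟨hmk, hkl.trans hln, hk⟩

variable {G : Type*} [AddCommGroup G]

/-- Any two successive nonzero increments of the sequence `c` are opposite: this is condition (ii)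
of the theorem, unrolled from the cycle of even residues to `ℕ`. -/
def ConsecutiveJumpsCancel (c : ℕ → G) : Prop :=
  ∀ l n, l < n → c (l + 1) ≠ c l → c (n + 1) ≠ c n →
    (∀ m, l < m → m < n → c (m + 1) = c m) → c (l + 1) - c l + (c (n + 1) - c n) = 0

namespace ConsecutiveJumpsCancel

variable {c : ℕ → G} {p : ℕ → Prop} {m n : ℕ}

theorem exists_return (hc : ConsecutiveJumpsCancel c)
    (hp : ∀ n, c (n + 1) = c n ↔ (p n ↔ p (n + 1))) (hmn : m < n) (hpmn : p m ↔ p n) :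
    ∃ k, m < k ∧ k ≤ n ∧ c k = c m ∧ (p k ↔ p m) := by
  by_cases hm : p m ↔ p (m + 1)
  · exact ⟨m + 1, m.lt_succ_self, hmn, (hp m).2 hm, hm.symm⟩
  have hne : p n ≠ p (m + 1) := fun h => hm (hpmn.trans (iff_of_eq h))
  obtain ⟨l, hml, hln, hl, hconst⟩ := exists_first_change hmn hne
  have hcconst : ∀ k, m + 1 ≤ k → k < l → c (k + 1) = c k :=
    fun k hmk hkl => (hp k).2 (iff_of_eq (hconst k hmk hkl).symm)
  have hcl : c l = c (m + 1) := eq_of_forall_succ_eq hml hcconst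
  have hpl : p l = p (m + 1) := eq_of_forall_succ_eq hml hconst
  have hcancel : c (m + 1) - c m + (c (l + 1) - c l) = 0 :=
    hc m l hml (fun h => hm ((hp m).1 h)) (fun h => hl (propext ((hp l).1 h)).symm) hcconst
  refine ⟨l + 1, by omega, hln, ?_, ?_⟩
  · rw [hcl, sub_add_sub_comm, add_comm (c m), add_sub_add_left_eq_sub] at hcancel
    exact sub_eq_zero.1 hcancel
  · rw [hpl, ne_eq, eq_iff_iff] at hl
    tauto

theorem eq_of_iff (hc : ConsecutiveJumpsCancel c)
    (hp : ∀ n, c (n + 1) = c n ↔ (p n ↔ p (n + 1))) (hmn : m ≤ n) (hpmn : p m ↔ p n) :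
    c m = c n := by
  induction hd : n - m using Nat.strong_induction_on generalizing m with
  | _ d ih =>
    rcases hmn.eq_or_lt with rfl | hlt
    · rfl
    obtain ⟨k, hmk, hkn, hck, hpk⟩ := hc.exists_return hp hlt hpmn
    rw [← hck]
    exact ih (n - k) (by omega) hkn (hpk.trans hpmn) rfl

theorem eq_iff_of_le (hc : ConsecutiveJumpsCancel c)
    (hp : ∀ n, c (n + 1) = c n ↔ (p n ↔ p (n + 1))) (hmn : m ≤ n) :
    c m = c n ↔ (p m ↔ p n) := by
  refine ⟨fun h => ?_, hc.eq_of_iff hp hmn⟩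
  by_contra hpmn
  obtain ⟨l, hml, hln, hl, hconst⟩ :=
    exists_first_change hmn (fun h : p n = p m => hpmn (iff_of_eq h.symm))
  have hpl : p l = p m := eq_of_forall_succ_eq hml hconst
  have hcl : c m = c l := hc.eq_of_iff hp hml (iff_of_eq hpl.symm)
  have hcl' : c (l + 1) = c n := by
    refine hc.eq_of_iff hp hln ?_
    rw [hpl, ne_eq, eq_iff_iff] at hl
    tauto
  exact hl (propext ((hp l).1 (hcl'.trans (h.symm.trans hcl)))).symm

theorem eq_iff (hc : ConsecutiveJumpsCancel c)
    (hp : ∀ n, c (n + 1) = c n ↔ (p n ↔ p (n + 1))) (m n : ℕ) :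
    c m = c n ↔ (p m ↔ p n) := by
  rcases le_total m n with h | h
  · exact hc.eq_iff_of_le hp h
  · rw [eq_comm, iff_comm (a := p m)]
    exact hc.eq_iff_of_le hp h

end ConsecutiveJumpsCancel

end Sequences

section EvenResidues

variable {r : ℕ}

theorem even_val_natCast (n : ℕ) : Even (n : ZMod (2 * r)).val ↔ Even n := by
  rw [ZMod.val_natCast, Nat.even_iff, Nat.even_iff, Nat.mod_mul_right_mod]

theorem exists_even_val_notMem_of_card_lt {D : Finset (ZMod (2 * r))} (hD : D.card < r) :
    ∃ i : ZMod (2 * r), Even i.val ∧ i ∉ D := by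
  classical
  let double : ℕ → ZMod (2 * r) := fun n => ((2 * n : ℕ) : ZMod (2 * r))
  have hinj : Set.InjOn double (Finset.range r) := by
    intro m hm n hn hmn
    have hm' : m < r := Finset.mem_range.1 hm
    have hn' : n < r := Finset.mem_range.1 hn
    have hval := congrArg ZMod.val hmn
    simp only [double] at hval
    rw [ZMod.val_cast_of_lt (by omega), ZMod.val_cast_of_lt (by omega)] at hval
    omega
  have hcard : D.card < ((Finset.range r).image double).card := by
    rwa [Finset.card_image_of_injOn hinj, Finset.card_range]
  obtain ⟨i, himage, hi⟩ := Finset.exists_mem_notMem_of_card_lt_card hcard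
  obtain ⟨n, -, rfl⟩ := Finset.mem_image.1 himage
  exact ⟨double n, (even_val_natCast _).2 (even_two_mul n), hi⟩

variable [NeZero r]

theorem even_val_add_one (i : ZMod (2 * r)) : Even (i + 1).val ↔ ¬ Even i.val := by
  have h := even_val_natCast (r := r) (i.val + 1)
  rwa [Nat.cast_add_one, ZMod.natCast_zmod_val, Nat.even_add_one] at h

theorem exists_natCast_two_mul_eq {i : ZMod (2 * r)} (hi : Even i.val) :
    ∃ n : ℕ, ((2 * n : ℕ) : ZMod (2 * r)) = i :=
  ⟨i.val / 2, by rw [Nat.two_mul_div_two_of_even hi, ZMod.natCast_zmod_val]⟩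

end EvenResidues

theorem exists_primitive_of_sum_eq_zero {G : Type*} [AddCommGroup G] {n : ℕ} [NeZero n]
    {b : ZMod n → G} (hb : ∑ m ∈ Finset.range n, b (m : ZMod n) = 0) :
    ∃ s : ZMod n → G, ∀ i, s (i + 1) = s i + b (i + 1) := by
  refine ⟨fun i => ∑ m ∈ Finset.range (i.val + 1), b (m : ZMod n), fun i => ?_⟩
  have hi : ((i.val + 1 : ℕ) : ZMod n) = i + 1 := by
    rw [Nat.cast_add_one, ZMod.natCast_zmod_val]
  rcases Nat.lt_or_ge (i.val + 1) n with hlt | hge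
  · have hval : (i + 1).val = i.val + 1 := by rw [← hi, ZMod.val_cast_of_lt hlt]
    simp only [hval]
    rw [Finset.sum_range_succ, hi]
  · have hn : i.val + 1 = n := le_antisymm (ZMod.val_lt i) hge
    have hzero : i + 1 = 0 := by rw [← hi, hn, ZMod.natCast_self]
    simp [hzero, hn, hb]

theorem primitive_add_two_sub {G : Type*} [AddCommGroup G] {n : ℕ} {b s : ZMod n → G}
    (hs : ∀ i, s (i + 1) = s i + b (i + 1)) (i : ZMod n) :
    s (i + 2) - s i = b (i + 1) + b (i + 2) := by
  have hstep := hs (i + 1)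
  rw [add_assoc i, one_add_one_eq_two] at hstep
  rw [hstep, hs, add_assoc, add_sub_cancel_left]

section Residues

variable {A : Type*} [CommRing A] {ϖ : A} {r : ℕ} [NeZero r] {b s : ZMod (2 * r) → A}
  {D : Set (ZMod (2 * r))}

theorem dvd_primitive_sub_iff (hs : ∀ i, s (i + 1) = s i + b (i + 1))
    (hjump : ∀ j : ZMod (2 * r), Even j.val → (ϖ ∣ b (j + 1) + b (j + 2) ↔ (j ∈ D ↔ j + 2 ∈ D)))
    (hcancel : ∀ j j' : ZMod (2 * r), Even j.val → Even j'.val →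
      ¬ ϖ ∣ b (j + 1) + b (j + 2) → ¬ ϖ ∣ b (j' + 1) + b (j' + 2) →
      (∀ m : ℕ, 1 ≤ m →
        (∀ m' : ℕ, 1 ≤ m' → m' ≤ m → j + ((2 * m' : ℕ) : ZMod (2 * r)) ≠ j') →
        ϖ ∣ b (j + ((2 * m : ℕ) : ZMod (2 * r)) + 1)
              + b (j + ((2 * m : ℕ) : ZMod (2 * r)) + 2)) →
      ϖ ∣ (b (j + 1) + b (j + 2)) + (b (j' + 1) + b (j' + 2)))
    {i j : ZMod (2 * r)} (hi : Even i.val) (hj : Even j.val) :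
    ϖ ∣ s i - s j ↔ (i ∈ D ↔ j ∈ D) := by
  let double : ℕ → ZMod (2 * r) := fun n => ((2 * n : ℕ) : ZMod (2 * r))
  let c : ℕ → A ⧸ Ideal.span {ϖ} := fun n => Ideal.Quotient.mk _ (s (double n))
  have hdouble : ∀ n, Even (double n).val := fun n => (even_val_natCast _).2 (even_two_mul n)
  have hdouble_add : ∀ m n, double m + double n = double (m + n) := fun m n => by
    simp only [double, mul_add, Nat.cast_add]
  have hdouble_succ : ∀ n, double (n + 1) = double n + 2 := fun n => by
    simp only [double, mul_add_one, Nat.cast_add, Nat.cast_ofNat]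
  have hincr : ∀ n, c (n + 1) - c n
      = Ideal.Quotient.mk _ (b (double n + 1) + b (double n + 2)) := fun n => by
    simp only [c, hdouble_succ, ← map_sub, primitive_add_two_sub hs]
  have hdvd : ∀ n, c (n + 1) = c n ↔ ϖ ∣ b (double n + 1) + b (double n + 2) := fun n => by
    rw [← sub_eq_zero, hincr, Ideal.Quotient.eq_zero_iff_dvd]
  have hcjump : ∀ n, c (n + 1) = c n ↔ (double n ∈ D ↔ double (n + 1) ∈ D) := fun n => by
    rw [hdvd, hjump _ (hdouble n), hdouble_succ]
  have hccancel : ConsecutiveJumpsCancel c := by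
    intro l n hln hl hn hconst
    rw [hincr, hincr, ← map_add, Ideal.Quotient.eq_zero_iff_dvd]
    refine hcancel _ _ (hdouble l) (hdouble n) (mt (hdvd l).2 hl) (mt (hdvd n).2 hn)
      fun m hm hbetween => ?_
    have hlt : l + m < n := by
      by_contra! hle
      exact hbetween (n - l) (by omega) (by omega)
        ((hdouble_add l (n - l)).trans (by rw [Nat.add_sub_cancel' hln.le]))
    have hmid := (hdvd (l + m)).1 (hconst _ (by omega) hlt)
    rwa [← hdouble_add] at hmid
  obtain ⟨m, rfl⟩ := exists_natCast_two_mul_eq hi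
  obtain ⟨n, rfl⟩ := exists_natCast_two_mul_eq hj
  rw [← Ideal.Quotient.eq_zero_iff_dvd, map_sub, sub_eq_zero]
  exact hccancel.eq_iff hcjump m n

end Residues

section Decomposition

variable {A : Type*} [CommRing A] {r : ℕ}

/-- The matrix of the arrow `x_i` of `𝕄(I,J)`, over an arbitrary ring with a chosen element `ϖ`
in place of `ℂ[[t]]` and `t`. -/
def arrowMatrix (ϖ : A) (b : ZMod (2 * r) → A) (i : ZMod (2 * r)) : Matrix (Fin 2) (Fin 2) A :=
  if Even i.val then !![1, b i; 0, ϖ] else !![ϖ, b i; 0, 1]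

open Classical in
/-- The scalar by which the arrow `x_i` acts on the rank-1 module `L_X`. -/
def rankOneArrow (ϖ : A) (X : Set (ZMod (2 * r))) (i : ZMod (2 * r)) : A :=
  if i ∈ X then 1 else ϖ

/-- The profile of the rank-1 summand attached to a set `D` of even residues: `X` is
`summandProfile X'`, and `Y` is `summandProfile X'ᶜ`. Odd elements of `D` are irrelevant. -/
def summandProfile (D : Set (ZMod (2 * r))) : Set (ZMod (2 * r)) :=
  {i | if Even i.val then i ∉ D else i - 1 ∈ D}

open Classical in
/-- The images in `𝕄(I,J)` of the generators of `L_X`, `X = summandProfile D`. For a primitive `f`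
of `b`, the vectors `(f i, 1)` at odd `i` and `(f i, ϖ)` at even `i` span a rank-1 submodule;
at the even vertices in `D` the vector is divided by `ϖ`, with `q i` standing for `f i / ϖ`. -/
def saturatedSection (ϖ : A) (f q : ZMod (2 * r) → A) (D : Set (ZMod (2 * r)))
    (i : ZMod (2 * r)) : Fin 2 → A :=
  if Even i.val then if i ∈ D then ![q i, 1] else ![f i, ϖ] else ![f i, 1]

variable {ϖ : A} {b f g q q' s : ZMod (2 * r) → A} {D X : Set (ZMod (2 * r))}

theorem eq_arrowMatrix {x : ZMod (2 * r) → Matrix (Fin 2) (Fin 2) A}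
    (hodd : ∀ i, Odd i.val → x i = !![ϖ, b i; 0, 1])
    (heven : ∀ i, Even i.val → x i = !![1, b i; 0, ϖ]) : x = arrowMatrix ϖ b := by
  ext1 i
  by_cases hi : Even i.val
  · rw [heven i hi, arrowMatrix, if_pos hi]
  · rw [hodd i (Nat.not_even_iff_odd.1 hi), arrowMatrix, if_neg hi]

theorem det_saturatedSection (hq : ∀ i, Even i.val → i ∈ D → f i = ϖ * q i)
    (hq' : ∀ i, Even i.val → i ∈ Dᶜ → g i = ϖ * q' i) (i : ZMod (2 * r)) :
    (Matrix.of ![saturatedSection ϖ f q D i, saturatedSection ϖ g q' Dᶜ i])ᵀ.det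
      = f i - g i := by
  rw [det_transpose, det_fin_two]
  by_cases hi : Even i.val
  · by_cases hD : i ∈ D
    · simp [saturatedSection, hi, hD, hq, mul_comm]
    · simp [saturatedSection, hi, hD, hq']
  · simp [saturatedSection, hi]

variable [NeZero r]

theorem eq_summandProfile
    (hX : ∀ j : ZMod (2 * r), Even j.val → ((j + 1 ∈ X ↔ j ∈ D) ∧ (j + 2 ∈ X ↔ j + 2 ∉ D))) :
    X = summandProfile D := by
  ext i
  obtain ⟨j, rfl⟩ : ∃ j, i = j + 1 := ⟨i - 1, (sub_add_cancel i 1).symm⟩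
  by_cases hj : Even j.val
  · simp [summandProfile, even_val_add_one, hj, (hX j hj).1]
  · have hprev : Even (j - 1).val := by
      rwa [← not_not (a := Even (j - 1).val), ← even_val_add_one, sub_add_cancel]
    have htwo : j - 1 + 2 = j + 1 := by ring
    have hmem := (hX (j - 1) hprev).2
    rw [htwo] at hmem
    simp [summandProfile, even_val_add_one, hj, hmem]

theorem arrowMatrix_mulVec_saturatedSection (hf : ∀ i, f (i + 1) = f i + b (i + 1))
    (hq : ∀ i, Even i.val → i ∈ D → f i = ϖ * q i) (i : ZMod (2 * r)) :
    arrowMatrix ϖ b (i + 1) *ᵥ saturatedSection ϖ f q D i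
      = rankOneArrow ϖ (summandProfile D) (i + 1) • saturatedSection ϖ f q D (i + 1) := by
  have hsucc := even_val_add_one i
  rw [mulVec_fin_two]
  by_cases hi : Even i.val
  · by_cases hD : i ∈ D
    · simp [arrowMatrix, saturatedSection, rankOneArrow, summandProfile, hsucc, hi, hD, hf, hq]
    · simp [arrowMatrix, saturatedSection, rankOneArrow, summandProfile,
        hsucc, hi, hD, hf, mul_add, mul_comm]
  · by_cases hD : i + 1 ∈ D
    · simp [arrowMatrix, saturatedSection, rankOneArrow, summandProfile,
        hsucc, hi, hD, ← hf, hq (i + 1)]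
    · simp [arrowMatrix, saturatedSection, rankOneArrow, summandProfile, hsucc, hi, hD, ← hf]

theorem exists_basis_of_primitive (hs : ∀ i, s (i + 1) = s i + b (i + 1)) {κ μ : A}
    (hunit : IsUnit (μ - κ)) (hκ : ∀ i, Even i.val → i ∈ D → ϖ ∣ s i - κ)
    (hμ : ∀ i, Even i.val → i ∈ Dᶜ → ϖ ∣ s i - μ) :
    ∃ w v : ZMod (2 * r) → Fin 2 → A,
      (∀ i, IsUnit (Matrix.of ![w i, v i])ᵀ.det) ∧
      (∀ i, arrowMatrix ϖ b (i + 1) *ᵥ w i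
        = rankOneArrow ϖ (summandProfile D) (i + 1) • w (i + 1)) ∧
      (∀ i, arrowMatrix ϖ b (i + 1) *ᵥ v i
        = rankOneArrow ϖ (summandProfile Dᶜ) (i + 1) • v (i + 1)) := by
  have hprimitive : ∀ (a : A) (i), s (i + 1) - a = s i - a + b (i + 1) := fun a i => by
    rw [hs, add_sub_right_comm]
  choose! q hq using hκ
  choose! q' hq' using hμ
  refine ⟨saturatedSection ϖ (fun i => s i - κ) q D, saturatedSection ϖ (fun i => s i - μ) q' Dᶜ,
    fun i => ?_, arrowMatrix_mulVec_saturatedSection (hprimitive κ) hq,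
    arrowMatrix_mulVec_saturatedSection (hprimitive μ) hq'⟩
  rwa [det_saturatedSection hq hq', sub_sub_sub_cancel_left]

end Decomposition

theorem stmt10_general {A : Type*} [CommRing A] [IsLocalRing A] {ϖ : A}
    (hϖ : IsLocalRing.maximalIdeal A = Ideal.span {ϖ}) (r : ℕ) (b : ZMod (2 * r) → A)
    (hb : ∑ m ∈ Finset.range (2 * r), b ((m : ZMod (2 * r))) = 0)
    (x : ZMod (2 * r) → Matrix (Fin 2) (Fin 2) A)
    (hxodd : ∀ i : ZMod (2 * r), Odd i.val → x i = !![ϖ, b i; 0, 1])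
    (hxeven : ∀ i : ZMod (2 * r), Even i.val → x i = !![1, b i; 0, ϖ])
    (X' : Finset (ZMod (2 * r)))
    (hX'even : ∀ j ∈ X', Even (ZMod.val j))
    (hcard1 : 1 ≤ X'.card) (hcard2 : X'.card ≤ r - 1)
    (hi : ∀ j : ZMod (2 * r), Even j.val →
      ((ϖ ∣ (b (j + 1) + b (j + 2))) ↔ (j ∈ X' ↔ j + 2 ∈ X')))
    (hii : ∀ j j' : ZMod (2 * r), Even j.val → Even j'.val →
      ¬ ϖ ∣ (b (j + 1) + b (j + 2)) → ¬ ϖ ∣ (b (j' + 1) + b (j' + 2)) →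
      (∀ m : ℕ, 1 ≤ m →
        (∀ m' : ℕ, 1 ≤ m' → m' ≤ m → j + ((2 * m' : ℕ) : ZMod (2 * r)) ≠ j') →
        ϖ ∣ (b (j + ((2 * m : ℕ) : ZMod (2 * r)) + 1)
              + b (j + ((2 * m : ℕ) : ZMod (2 * r)) + 2))) →
      ϖ ∣ ((b (j + 1) + b (j + 2)) + (b (j' + 1) + b (j' + 2))))
    (X Y : Finset (ZMod (2 * r)))
    (hXdef : ∀ j : ZMod (2 * r), Even j.val →
      ((j + 1 ∈ X ↔ j ∈ X') ∧ (j + 2 ∈ X ↔ j + 2 ∉ X')))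
    (hYdef : ∀ j : ZMod (2 * r), Even j.val →
      ((j + 1 ∈ Y ↔ j ∉ X') ∧ (j + 2 ∈ Y ↔ j + 2 ∈ X'))) :
    ∃ w v : ZMod (2 * r) → Fin 2 → A,
      (∀ i : ZMod (2 * r), IsUnit ((Matrix.of ![w i, v i])ᵀ.det)) ∧
      (∀ i : ZMod (2 * r),
        (i + 1 ∈ X → (x (i + 1)).mulVec (w i) = w (i + 1)) ∧
        (i + 1 ∉ X → (x (i + 1)).mulVec (w i) = ϖ • w (i + 1)) ∧
        (i + 1 ∈ Y → (x (i + 1)).mulVec (v i) = v (i + 1)) ∧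
        (i + 1 ∉ Y → (x (i + 1)).mulVec (v i) = ϖ • v (i + 1))) := by
  have : NeZero r := ⟨by omega⟩
  obtain ⟨s, hs⟩ := exists_primitive_of_sum_eq_zero hb
  have hdvd : ∀ {i j : ZMod (2 * r)}, Even i.val → Even j.val →
      (ϖ ∣ s i - s j ↔ (i ∈ X' ↔ j ∈ X')) :=
    dvd_primitive_sub_iff (D := (X' : Set (ZMod (2 * r)))) hs hi hii
  obtain ⟨i₀, hi₀⟩ := Finset.card_pos.1 hcard1
  obtain ⟨j₀, hj₀even, hj₀⟩ := exists_even_val_notMem_of_card_lt (D := X') (by omega)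
  have hi₀even := hX'even i₀ hi₀
  have hunit : IsUnit (s j₀ - s i₀) := by
    rw [← IsLocalRing.notMem_maximalIdeal, hϖ, Ideal.mem_span_singleton, hdvd hj₀even hi₀even]
    exact fun h => hj₀ (h.2 hi₀)
  obtain ⟨w, v, hdet, hw, hv⟩ := exists_basis_of_primitive (D := (X' : Set (ZMod (2 * r)))) hs hunit
    (fun i hieven hiX => (hdvd hieven hi₀even).2 (iff_of_true hiX hi₀))
    (fun i hieven hiX => (hdvd hieven hj₀even).2 (iff_of_false hiX hj₀))
  have hx : x = arrowMatrix ϖ b := eq_arrowMatrix hxodd hxeven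
  have hX : (X : Set (ZMod (2 * r))) = summandProfile ↑X' := eq_summandProfile hXdef
  have hY : (Y : Set (ZMod (2 * r))) = summandProfile (↑X')ᶜ :=
    eq_summandProfile (by simpa using hYdef)
  rw [← hx, ← hX] at hw
  rw [← hx, ← hY] at hv
  exact ⟨w, v, hdet, fun i =>
    ⟨fun h => by simpa [rankOneArrow, h] using hw i, fun h => by simpa [rankOneArrow, h] using hw i,
      fun h => by simpa [rankOneArrow, h] using hv i,
      fun h => by simpa [rankOneArrow, h] using hv i⟩⟩

/-- (Theorem 3.7, explicit decomposition of `𝕄(I,J)`.)  In the case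
`(k, n) = (r, 2r)` with `I = {1,3,…,2r−1}` (odd residues of `ℤ/2r`),
`J = {2,4,…,2r}` (even residues), arrow matrices `x_i = [[t, b_i],[0, 1]]` for odd
`i`, `x_i = [[1, b_i],[0, t]]` for even `i`, and `b_1 + ⋯ + b_{2r} = 0`: let `X'`
be a set of even residues (peaks of `I`) with `1 ≤ |X'| ≤ r − 1`, and assume
(i) for every even `j`, `t ∣ b_{j+1} + b_{j+2}` iff (`j ∈ X'` ⇔ `j+2 ∈ X'`); and
(ii) whenever `j, j'` are even with `t ∤ b_{j+1}+b_{j+2}`, `t ∤ b_{j'+1}+b_{j'+2}`,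
and `t ∣ b_{l+1}+b_{l+2}` for every even `l` lying cyclically strictly between `j`
and `j'` (i.e. `l = j + 2m` with `m ≥ 1` and `j'` not among `j+2,…,j+2m`), then
`t ∣ (b_{j+1}+b_{j+2}) + (b_{j'+1}+b_{j'+2})`.
Define `X, Y ⊆ ℤ/2r` by: for even `j`, `j+1 ∈ X ⇔ j ∈ X'`, `j+2 ∈ X ⇔ j+2 ∉ X'`,
`j+1 ∈ Y ⇔ j ∉ X'`, `j+2 ∈ Y ⇔ j+2 ∈ X'`.  Then `𝕄(I,J) ≅ L_X ⊕ L_Y`: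
concretely, there are vectors `w_i, v_i ∈ R²` such that the matrix with columns
`w_i, v_i` is invertible for every `i`, and `x_{i+1}·w_i = w_{i+1}` if `i+1 ∈ X`,
`x_{i+1}·w_i = t·w_{i+1}` if `i+1 ∉ X`, `x_{i+1}·v_i = v_{i+1}` if `i+1 ∈ Y`, and
`x_{i+1}·v_i = t·v_{i+1}` if `i+1 ∉ Y`. -/
theorem stmt10 (r : ℕ) (hr : 2 ≤ r) (b : ZMod (2 * r) → R)
    (hb : ∑ m ∈ Finset.range (2 * r), b ((m : ZMod (2 * r))) = 0)
    (x : ZMod (2 * r) → M2)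
    (hxodd : ∀ i : ZMod (2 * r), Odd i.val → x i = !![t, b i; 0, 1])
    (hxeven : ∀ i : ZMod (2 * r), Even i.val → x i = !![1, b i; 0, t])
    (X' : Finset (ZMod (2 * r)))
    (hX'even : ∀ j ∈ X', Even (ZMod.val j))
    (hcard1 : 1 ≤ X'.card) (hcard2 : X'.card ≤ r - 1)
    (hi : ∀ j : ZMod (2 * r), Even j.val →
      ((t ∣ (b (j + 1) + b (j + 2))) ↔ (j ∈ X' ↔ j + 2 ∈ X')))
    (hii : ∀ j j' : ZMod (2 * r), Even j.val → Even j'.val →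
      ¬ t ∣ (b (j + 1) + b (j + 2)) → ¬ t ∣ (b (j' + 1) + b (j' + 2)) →
      (∀ m : ℕ, 1 ≤ m →
        (∀ m' : ℕ, 1 ≤ m' → m' ≤ m → j + ((2 * m' : ℕ) : ZMod (2 * r)) ≠ j') →
        t ∣ (b (j + ((2 * m : ℕ) : ZMod (2 * r)) + 1)
              + b (j + ((2 * m : ℕ) : ZMod (2 * r)) + 2))) →
      t ∣ ((b (j + 1) + b (j + 2)) + (b (j' + 1) + b (j' + 2))))
    (X Y : Finset (ZMod (2 * r)))
    (hXdef : ∀ j : ZMod (2 * r), Even j.val →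
      ((j + 1 ∈ X ↔ j ∈ X') ∧ (j + 2 ∈ X ↔ j + 2 ∉ X')))
    (hYdef : ∀ j : ZMod (2 * r), Even j.val →
      ((j + 1 ∈ Y ↔ j ∉ X') ∧ (j + 2 ∈ Y ↔ j + 2 ∈ X'))) :
    ∃ w v : ZMod (2 * r) → Fin 2 → R,
      (∀ i : ZMod (2 * r), IsUnit ((Matrix.of ![w i, v i])ᵀ.det)) ∧
      (∀ i : ZMod (2 * r),
        (i + 1 ∈ X → (x (i + 1)).mulVec (w i) = w (i + 1)) ∧
        (i + 1 ∉ X → (x (i + 1)).mulVec (w i) = t • w (i + 1)) ∧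
        (i + 1 ∈ Y → (x (i + 1)).mulVec (v i) = v (i + 1)) ∧
        (i + 1 ∉ Y → (x (i + 1)).mulVec (v i) = t • v (i + 1))) :=
  stmt10_general PowerSeries.maximalIdeal_eq_span_X r b hb x hxodd hxeven X' hX'even hcard1 hcard2
    hi hii X Y hXdef hYdef

end
end

section
/- (Full splitting case, from Section 3) If t divides b_i + b_{i+1} for every odd i ∈ {1, 3, …, 2r−1}, then 𝕄(I,J) is isomorphic to L_I ⊕ L_J; concretely, there exist vectors w_i, v_i ∈ R² for i ∈ ℤ/2r such that for every i the 2×2 matrix with columns w_i and v_i is invertible over R, and for every i: x_{i+1}·w_i = w_{i+1} if i+1 is even (i.e. i+1 ∈ J) and x_{i+1}·w_i = t·w_{i+1} if i+1 is odd, while x_{i+1}·v_i = v_{i+1} if i+1 is odd (i.e. i+1 ∈ I) and x_{i+1}·v_i = t·v_{i+1} if i+1 is even. -/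
open PowerSeries Matrix

noncomputable section

/-!
Over the cycle put `c i = b 1 + ⋯ + b i`, which is well defined since the total sum vanishes. The
first basis vector spans a copy of `L_J`, and a complement is spanned by vectors `(a i, 1)` as soon
as `a (i + 1) = t * a i + b (i + 1)` when `i + 1` is odd and `t * a (i + 1) = a i + b (i + 1)` when
`i + 1` is even. Both hold for `a i = c i` at odd `i` and `a i = c i / t` at even `i`; the quotient
exists because at even `i` the sum `c i` consists of pairs `b j + b (j + 1)` with `j` odd.
-/

lemma dvd_sum_range_two_mul {A : Type*} [NonUnitalSemiring A] {d : A} {f : ℕ → A}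
    (h : ∀ k, d ∣ f (2 * k) + f (2 * k + 1)) (k : ℕ) : d ∣ ∑ m ∈ Finset.range (2 * k), f m := by
  induction k with
  | zero => simp
  | succ k ih =>
    rw [Nat.mul_succ, Finset.sum_range_succ, Finset.sum_range_succ, add_assoc]
    exact dvd_add ih (h k)

section CyclicPartialSum

variable {n : ℕ} {M A : Type*} [AddCommMonoid M] [NonUnitalSemiring A]

lemma even_val_natCast_iff (hn : Even n) (m : ℕ) : Even (m : ZMod n).val ↔ Even m := by
  rw [ZMod.val_natCast, hn.mod_even_iff]

lemma sum_range_natCast_add_one (b : ZMod n → M) :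
    ∑ m ∈ Finset.range n, b ((m : ZMod n) + 1) = ∑ m ∈ Finset.range n, b (m : ZMod n) := by
  cases n with
  | zero => rfl
  | succ k =>
    rw [Finset.sum_range_succ, Finset.sum_range_succ', ← Nat.cast_add_one, ZMod.natCast_self]
    simp only [Nat.cast_add, Nat.cast_one, Nat.cast_zero]

/-- The sum `b 1 + ⋯ + b i` along the cycle `ZMod n`, for `0 ≤ i < n`. The summation starts at
index `1`, so the value at `0` is the empty sum and `b 0` (playing the role of `b n`) never
occurs. -/
def cyclicPartialSum (b : ZMod n → M) (i : ZMod n) : M :=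
  ∑ m ∈ Finset.range i.val, b ((m : ZMod n) + 1)

lemma dvd_cyclicPartialSum_of_even_val {b : ZMod n → A} {d : A} (hn : Even n)
    (hdvd : ∀ i : ZMod n, Odd i.val → d ∣ b i + b (i + 1)) {i : ZMod n} (hi : Even i.val) :
    d ∣ cyclicPartialSum b i := by
  obtain ⟨k, hk⟩ := hi.two_dvd
  rw [cyclicPartialSum, hk]
  refine dvd_sum_range_two_mul (fun j ↦ ?_) k
  have odd_val : Odd ((2 * j + 1 : ℕ) : ZMod n).val := by
    rw [← Nat.not_even_iff_odd, even_val_natCast_iff hn, Nat.not_even_iff_odd]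
    exact odd_two_mul_add_one j
  simpa only [Nat.cast_add_one] using hdvd _ odd_val

variable [NeZero n]

lemma even_val_add_one_iff (hn : Even n) (i : ZMod n) : Even (i + 1).val ↔ Odd i.val := by
  have natCast_succ_val : ((i.val + 1 : ℕ) : ZMod n) = i + 1 := by simp
  rw [← natCast_succ_val, even_val_natCast_iff hn, Nat.even_add_one, Nat.not_even_iff_odd]

lemma cyclicPartialSum_add_one {b : ZMod n → M}
    (hb : ∑ m ∈ Finset.range n, b (m : ZMod n) = 0) (i : ZMod n) :
    cyclicPartialSum b (i + 1) = cyclicPartialSum b i + b (i + 1) := by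
  have sum_range_val_succ : ∑ m ∈ Finset.range (i.val + 1), b ((m : ZMod n) + 1) =
      cyclicPartialSum b i + b (i + 1) := by
    rw [Finset.sum_range_succ, ZMod.natCast_zmod_val, cyclicPartialSum]
  have val_succ : (i + 1).val = (i.val + 1) % n := by
    rw [← ZMod.val_natCast, Nat.cast_add_one, ZMod.natCast_zmod_val]
  rw [← sum_range_val_succ, cyclicPartialSum, val_succ]
  rcases (Nat.succ_le_of_lt i.val_lt).lt_or_eq with hlt | hwrap
  · rw [Nat.mod_eq_of_lt hlt]
  · rw [show i.val + 1 = n from hwrap, Nat.mod_self, Finset.sum_range_zero,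
      sum_range_natCast_add_one, hb]

lemma exists_complement_coeff {b : ZMod n → A} {d : A} (hn : Even n)
    (hb : ∑ m ∈ Finset.range n, b (m : ZMod n) = 0)
    (hdvd : ∀ i : ZMod n, Odd i.val → d ∣ b i + b (i + 1)) :
    ∃ a : ZMod n → A, ∀ i,
      (Odd (i + 1).val → a (i + 1) = d * a i + b (i + 1)) ∧
      (Even (i + 1).val → d * a (i + 1) = a i + b (i + 1)) := by
  choose! q hq using fun (i : ZMod n) (hi : Even i.val) ↦
    dvd_cyclicPartialSum_of_even_val hn hdvd hi
  refine ⟨fun i ↦ if Even i.val then q i else cyclicPartialSum b i, fun i ↦ ⟨fun hodd ↦ ?_,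
    fun heven ↦ ?_⟩⟩
  · have not_even : ¬ Even (i + 1).val := Nat.not_even_iff_odd.mpr hodd
    have even_val : Even i.val := by
      rwa [even_val_add_one_iff hn, Nat.not_odd_iff_even] at not_even
    simp only [if_neg not_even, if_pos even_val]
    rw [cyclicPartialSum_add_one hb, hq i even_val]
  · have not_even : ¬ Even i.val :=
      Nat.not_even_iff_odd.mpr ((even_val_add_one_iff hn i).mp heven)
    simp only [if_pos heven, if_neg not_even]
    rw [← hq _ heven, cyclicPartialSum_add_one hb]

end CyclicPartialSum

lemma upperTriangular_mulVec {A : Type*} [NonUnitalNonAssocSemiring A] (a b d p q : A) :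
    !![a, b; 0, d] *ᵥ ![p, q] = ![a * p + b * q, d * q] := by
  simp

theorem stmt11_general {A : Type*} [CommRing A] (τ : A) {r : ℕ} (hr : r ≠ 0)
    (b : ZMod (2 * r) → A)
    (hb : ∑ m ∈ Finset.range (2 * r), b (m : ZMod (2 * r)) = 0)
    (x : ZMod (2 * r) → Matrix (Fin 2) (Fin 2) A)
    (hxodd : ∀ i : ZMod (2 * r), Odd i.val → x i = !![τ, b i; 0, 1])
    (hxeven : ∀ i : ZMod (2 * r), Even i.val → x i = !![1, b i; 0, τ])
    (hdvd : ∀ i : ZMod (2 * r), Odd i.val → τ ∣ b i + b (i + 1)) :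
    ∃ w v : ZMod (2 * r) → Fin 2 → A,
      (∀ i : ZMod (2 * r), IsUnit ((Matrix.of ![w i, v i])ᵀ.det)) ∧
      (∀ i : ZMod (2 * r),
        (Even (i + 1).val → (x (i + 1)).mulVec (w i) = w (i + 1)) ∧
        (Odd (i + 1).val → (x (i + 1)).mulVec (w i) = τ • w (i + 1)) ∧
        (Odd (i + 1).val → (x (i + 1)).mulVec (v i) = v (i + 1)) ∧
        (Even (i + 1).val → (x (i + 1)).mulVec (v i) = τ • v (i + 1))) := by
  have : NeZero (2 * r) := ⟨mul_ne_zero two_ne_zero hr⟩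
  obtain ⟨a, ha⟩ := exists_complement_coeff (even_two_mul r) hb hdvd
  refine ⟨fun _ ↦ ![1, 0], fun i ↦ ![a i, 1], fun i ↦ ?_,
    fun i ↦ ⟨fun heven ↦ ?_, fun hodd ↦ ?_, fun hodd ↦ ?_, fun heven ↦ ?_⟩⟩
  · simp [det_fin_two]
  · rw [hxeven _ heven, upperTriangular_mulVec]
    simp
  · rw [hxodd _ hodd, upperTriangular_mulVec]
    simp
  · rw [hxodd _ hodd, upperTriangular_mulVec]
    simp [(ha i).1 hodd]
  · rw [hxeven _ heven, upperTriangular_mulVec]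
    simp [(ha i).2 heven]

/-- (Full splitting case, from Section 3.)  In the case `(k, n) = (r, 2r)` with
`I = {1,3,…,2r−1}` (odd residues), `J = {2,4,…,2r}` (even residues), arrow matrices
`x_i = [[t, b_i],[0, 1]]` for odd `i`, `x_i = [[1, b_i],[0, t]]` for even `i`, and
`b_1 + ⋯ + b_{2r} = 0`: if `t ∣ b_i + b_{i+1}` for every odd `i`, then
`𝕄(I,J) ≅ L_I ⊕ L_J`.  Concretely, there are vectors `w_i, v_i ∈ R²` such that the
matrix with columns `w_i, v_i` is invertible for every `i`, and `x_{i+1}·w_i` equals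
`w_{i+1}` if `i+1 ∈ J` (even) and `t·w_{i+1}` if `i+1 ∉ J`, while `x_{i+1}·v_i`
equals `v_{i+1}` if `i+1 ∈ I` (odd) and `t·v_{i+1}` if `i+1 ∉ I`. -/
theorem stmt11 (r : ℕ) (hr : 2 ≤ r) (b : ZMod (2 * r) → R)
    (hb : ∑ m ∈ Finset.range (2 * r), b ((m : ZMod (2 * r))) = 0)
    (x : ZMod (2 * r) → M2)
    (hxodd : ∀ i : ZMod (2 * r), Odd i.val → x i = !![t, b i; 0, 1])
    (hxeven : ∀ i : ZMod (2 * r), Even i.val → x i = !![1, b i; 0, t])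
    (hdvd : ∀ i : ZMod (2 * r), Odd i.val → t ∣ (b i + b (i + 1))) :
    ∃ w v : ZMod (2 * r) → Fin 2 → R,
      (∀ i : ZMod (2 * r), IsUnit ((Matrix.of ![w i, v i])ᵀ.det)) ∧
      (∀ i : ZMod (2 * r),
        (Even (i + 1).val → (x (i + 1)).mulVec (w i) = w (i + 1)) ∧
        (Odd (i + 1).val → (x (i + 1)).mulVec (w i) = t • w (i + 1)) ∧
        (Odd (i + 1).val → (x (i + 1)).mulVec (v i) = v (i + 1)) ∧
        (Even (i + 1).val → (x (i + 1)).mulVec (v i) = t • v (i + 1))) := by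
  exact stmt11_general t (Nat.ne_zero_of_lt hr) b hb x hxodd hxeven hdvd

end
end
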